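/- arXiv:2202.06215 — 4 statements merged into one kernel-verified Lean document; each statement's English description precedes it below -/
import Mathlib

section
/- (Transversality of the linear frequencies, Proposition 5.4.) There exist an integer k₀* ≥ 0 and a constant ρ₀ > 0 such that for every γ ∈ [γ₁,γ₂] the following hold, where ∂_γ^k denotes the k-th derivative in γ and ⟨ℓ⟩ := max{1,|ℓ|}: (a) max_{0≤k≤k₀*} |∂_γ^k ( ω⃗(γ)·ℓ )| ≥ ρ₀⟨ℓ⟩ for all ℓ ∈ ℤ^{|𝕊|} \ {0}; (b) max_{0≤k≤k₀*} |∂_γ^k ( ω⃗(γ)·ℓ + j Ω₁(γ) )| ≥ ρ₀⟨ℓ⟩ for all (ℓ,j) ∈ (ℤ^{|𝕊|}×ℤ) \ {(0,0)}; (c) max_{0≤k≤k₀*} |∂_γ^k ( ω⃗(γ)·ℓ + Ω_n(γ) )| ≥ ρ₀⟨ℓ⟩ for all ℓ ∈ ℤ^{|𝕊|} and all n ∈ ({1} ∪ {n̄+1, n̄+2, …}) \ 𝕊; (d) max_{0≤k≤k₀*} |∂_γ^k ( ω⃗(γ)·ℓ + Ω_n(γ) − Ω_{n'}(γ) )| ≥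 ρ₀⟨ℓ⟩ for all ℓ ∈ ℤ^{|𝕊|} and all n, n' ∈ ({1} ∪ {n̄+1, n̄+2, …}) \ 𝕊 with (ℓ,n,n') ≠ (0,n,n); (e) max_{0≤k≤k₀*} |∂_γ^k ( ω⃗(γ)·ℓ + Ω_n(γ) + Ω_{n'}(γ) )| ≥ ρ₀⟨ℓ⟩ for all ℓ ∈ ℤ^{|𝕊|} and all n, n' ∈ ({1} ∪ {n̄+1, n̄+2, …}) \ 𝕊. -/
open Real

/-- `Ω_γ := γ/(1+γ)²`. -/
noncomputable def OmG (γ : ℝ) : ℝ := γ / (1 + γ) ^ 2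

/-- `κ_n(γ) := ((γ−1)/(γ+1))ⁿ`. -/
noncomputable def kap (n : ℕ) (γ : ℝ) : ℝ := ((γ - 1) / (γ + 1)) ^ n

/-- `μ_n^+(γ) := nΩ_γ − 1/2 + κ_n(γ)/2`. -/
noncomputable def muP (n : ℕ) (γ : ℝ) : ℝ := n * OmG γ - 1 / 2 + kap n γ / 2

/-- `μ_n^-(γ) := nΩ_γ − 1/2 − κ_n(γ)/2`. -/
noncomputable def muM (n : ℕ) (γ : ℝ) : ℝ := n * OmG γ - 1 / 2 - kap n γ / 2

/-- `Ω_n(γ) := √(μ_n^+(γ) μ_n^-(γ))`. -/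
noncomputable def Om (n : ℕ) (γ : ℝ) : ℝ := Real.sqrt (muP n γ * muM n γ)

/-- `⟨ℓ⟩ := max {1, |ℓ|}`. -/
noncomputable def brk {m : ℕ} (ℓ : Fin m → ℤ) : ℝ :=
  max 1 ((Finset.univ.sup (fun i => (ℓ i).natAbs) : ℕ) : ℝ)

section Abstract

open Filter Topology Finset

/-- Monomials `yⁿ`, perturbed by factors with nonzero limits, are linearly independent as `y → 0`. -/
theorem coeff_eq_zero_of_sum_pow_mul_eventuallyEq_zero {α : Type*} {l : Filter α} [l.NeBot]
    {y : α → ℝ} (hy : Tendsto y l (𝓝 0)) (hy0 : ∀ᶠ a in l, y a ≠ 0)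
    {h : ℕ → α → ℝ} {H : ℕ → ℝ} {J : Finset ℕ} (hh : ∀ n ∈ J, Tendsto (h n) l (𝓝 (H n)))
    (hH : ∀ n ∈ J, H n ≠ 0) {c : ℕ → ℝ}
    (hc : ∀ᶠ a in l, ∑ n ∈ J, c n * (y a ^ n * h n a) = 0) :
    ∀ n ∈ J, c n = 0 := by
  intro n
  induction n using Nat.strong_induction_on with
  | _ n ih =>
  intro hn
  have hlim : Tendsto (fun a => ∑ k ∈ J, c k * (y a ^ (k - n) * h k a)) l
      (𝓝 (∑ k ∈ J, c k * (0 ^ (k - n) * H k))) :=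
    tendsto_finsetSum _ fun k hk => ((hy.pow _).mul (hh k hk)).const_mul _
  have hval : ∑ k ∈ J, c k * (0 ^ (k - n) * H k) = c n * H n := by
    rw [Finset.sum_eq_single_of_mem n hn]
    · simp
    · intro k hk hkn
      rcases lt_or_gt_of_ne hkn with hlt | hgt
      · simp [ih k hlt hk]
      · simp [Nat.sub_ne_zero_of_lt hgt]
  have hzero : ∀ᶠ a in l, ∑ k ∈ J, c k * (y a ^ (k - n) * h k a) = 0 := by
    filter_upwards [hc, hy0] with a ha hya
    have : y a ^ n * ∑ k ∈ J, c k * (y a ^ (k - n) * h k a) = 0 := by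
      rw [← ha, Finset.mul_sum]
      refine Finset.sum_congr rfl fun k hk => ?_
      rcases lt_or_ge k n with hlt | hge
      · simp [ih k hlt hk]
      · rw [← Nat.add_sub_of_le hge, pow_add, Nat.add_sub_cancel_left]; ring
    exact (mul_eq_zero.mp this).resolve_left (pow_ne_zero _ hya)
  have := tendsto_nhds_unique (tendsto_const_nhds.congr' (hzero.mono fun a ha => ha.symm)) hlim
  rw [hval] at this
  exact (mul_eq_zero.mp this.symm).resolve_right (hH n hn)

theorem AnalyticAt.iteratedDeriv_analyticAt {𝕜 : Type*} [NontriviallyNormedField 𝕜]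
    [CompleteSpace 𝕜] {f : 𝕜 → 𝕜} {x : 𝕜} (hf : AnalyticAt 𝕜 f x) (k : ℕ) :
    AnalyticAt 𝕜 (iteratedDeriv k f) x := by
  rw [iteratedDeriv_eq_iterate]
  exact hf.iterated_deriv k

theorem AnalyticAt.eventually_eq_zero_of_iteratedDeriv_eq_zero {f : ℝ → ℝ} {x : ℝ}
    (hf : AnalyticAt ℝ f x) (h : ∀ k, iteratedDeriv k f x = 0) : f =ᶠ[𝓝 x] 0 := by
  have hp := hf.hasFPowerSeriesAt
  have : (FormalMultilinearSeries.ofScalars ℝ fun n => iteratedDeriv n f x / (n.factorial : ℝ))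
      = 0 := by
    ext n
    simp [FormalMultilinearSeries.ofScalars, h]
  rw [this] at hp
  exact hp.eventually_eq_zero

/-- Iterated real derivatives of the restriction of a holomorphic function that is real on `ℝ`. -/
theorem eventually_ofReal_iteratedDeriv_eq {F : ℂ → ℂ} {f : ℝ → ℝ} {x : ℝ}
    (hF : AnalyticAt ℂ F x) (hf : ∀ᶠ y : ℝ in 𝓝 x, F y = f y) (k : ℕ) :
    ∀ᶠ y : ℝ in 𝓝 x, iteratedDeriv k F y = (iteratedDeriv k f y : ℝ) := by
  induction k with
  | zero => simpa using hf
  | succ k ih =>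
    have han : ∀ᶠ y : ℝ in 𝓝 x, AnalyticAt ℂ F y :=
      Complex.continuous_ofReal.continuousAt.eventually hF.eventually_analyticAt
    filter_upwards [ih.eventually_nhds, han] with y hy hay
    have hd : HasDerivAt (iteratedDeriv k F) (iteratedDeriv (k + 1) F y) (y : ℂ) := by
      rw [iteratedDeriv_succ]
      exact (hay.iteratedDeriv_analyticAt k).differentiableAt.hasDerivAt
    have hre : HasDerivAt (iteratedDeriv k f) (iteratedDeriv (k + 1) F y).re y :=
      hd.real_of_complex.congr_of_eventuallyEq (hy.mono fun t ht => by simp [ht])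
    have hcx : HasDerivAt (fun t : ℝ => ((iteratedDeriv k f t : ℝ) : ℂ))
        (iteratedDeriv (k + 1) F y) y :=
      hd.comp_ofReal.congr_of_eventuallyEq (hy.mono fun t ht => by simp [ht])
    rw [iteratedDeriv_succ (f := f), hre.deriv]
    exact hcx.unique hre.ofReal_comp

/-- If no nontrivial combination of finitely many analytic functions vanishes to infinite order at a
point of a compact set, then combinations are bounded below uniformly by their coefficients, up to
finitely many derivatives. -/
theorem exists_le_abs_iteratedDeriv_sum {ι : Type*} {I : Finset ι} {f : ι → ℝ → ℝ}
    {K : Set ℝ} (hK : IsCompact K) (hf : ∀ i ∈ I, ∀ x ∈ K, AnalyticAt ℝ (f i) x)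
    (hnd : ∀ x ∈ K, ∀ c : ι → ℝ,
      (∀ k, iteratedDeriv k (fun y => ∑ i ∈ I, c i * f i y) x = 0) → ∀ i ∈ I, c i = 0) :
    ∃ (k₀ : ℕ) (ρ : ℝ), 0 < ρ ∧ ∀ x ∈ K, ∀ c : ι → ℝ, ∃ k ≤ k₀, ∀ i ∈ I,
      ρ * |c i| ≤ |iteratedDeriv k (fun y => ∑ i ∈ I, c i * f i y) x| := by
  classical
  have hlin : ∀ x ∈ K, ∀ c : ι → ℝ, ∀ k, iteratedDeriv k (fun y => ∑ i ∈ I, c i * f i y) x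
      = ∑ i ∈ I, c i * iteratedDeriv k (f i) x := by
    intro x hx c k
    rw [iteratedDeriv_fun_sum fun i hi => contDiffAt_const.mul (hf i hi x hx).contDiffAt]
    exact Finset.sum_congr rfl fun i hi => iteratedDeriv_const_mul _ (hf i hi x hx).contDiffAt
  set g : ℕ → K × Metric.sphere (0 : I → ℝ) 1 → ℝ := fun k p =>
    ∑ j ∈ range (k + 1), |∑ i : I, p.2.1 i * iteratedDeriv j (f i) p.1| with hg
  have hgc : ∀ k, Continuous (g k) := by
    intro k
    have hfc : ∀ j (i : I), Continuous fun p : K × Metric.sphere (0 : I → ℝ) 1 =>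
        iteratedDeriv j (f i) p.1 := by
      intro j i
      have : ContinuousOn (iteratedDeriv j (f i)) K := fun x hx =>
        ((hf i i.2 x hx).iteratedDeriv_analyticAt j).continuousAt.continuousWithinAt
      exact this.domRestrict.comp continuous_fst
    refine continuous_finsetSum _ fun j _ => (continuous_finsetSum _ fun i _ => ?_).abs
    exact ((continuous_apply i).comp (continuous_subtype_val.comp continuous_snd)).mul (hfc j i)
  have hmono : Monotone fun k => {p | 0 < g k p} := by
    intro k l hkl p hp
    have hle : g k p ≤ g l p := Finset.sum_le_sum_of_subset_of_nonneg
      (Finset.range_mono (by omega)) fun _ _ _ => abs_nonneg _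
    exact lt_of_lt_of_le hp hle
  have : CompactSpace K := isCompact_iff_compactSpace.mp hK
  obtain ⟨k₀, hk₀⟩ := (isCompact_univ (X := K × Metric.sphere (0 : I → ℝ) 1)).elim_directed_cover
    (fun k => {p | 0 < g k p}) (fun k => isOpen_lt continuous_const (hgc k))
    (by
      rintro ⟨⟨x, hx⟩, ⟨c, hc⟩⟩ -
      by_contra hcon
      simp only [Set.mem_iUnion, Set.mem_ofPred_eq, not_exists, not_lt] at hcon
      have hz : ∀ k, ∑ i : I, c i * iteratedDeriv k (f i) x = 0 := by
        intro k
        have h1 := Finset.single_le_sum (f := fun j => |∑ i : I, c i * iteratedDeriv j (f i) x|)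
          (fun j _ => abs_nonneg _) (Finset.self_mem_range_succ k)
        exact abs_nonpos_iff.mp (h1.trans (hcon k))
      have hc0 := hnd x hx (fun i => if h : i ∈ I then c ⟨i, h⟩ else 0) (fun k => by
        rw [hlin x hx, ← hz k, ← Finset.sum_coe_sort I]
        exact Finset.sum_congr rfl fun i _ => by simp)
      have : c = 0 := by
        ext i
        simpa using hc0 i i.2
      simp [this] at hc)
    hmono.directed_le
  obtain ⟨δ, hδ, hδg⟩ : ∃ δ > 0, ∀ p, δ ≤ g k₀ p := by
    obtain hemp | hne := isEmpty_or_nonempty (K × Metric.sphere (0 : I → ℝ) 1)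
    · exact ⟨1, one_pos, fun p => hemp.elim p⟩
    · obtain ⟨p, -, hp⟩ := isCompact_univ.exists_isMinOn Set.univ_nonempty (hgc k₀).continuousOn
      exact ⟨g k₀ p, hk₀ (Set.mem_univ p), fun q => hp (Set.mem_univ q)⟩
  refine ⟨k₀, δ / (k₀ + 1), by positivity, fun x hx c => ?_⟩
  set v : I → ℝ := fun i => c i with hv
  by_cases hv0 : v = 0
  · refine ⟨0, Nat.zero_le _, fun i hi => ?_⟩
    have : c i = 0 := congrFun hv0 ⟨i, hi⟩
    simp [this]
  have hn : 0 < ‖v‖ := norm_pos_iff.mpr hv0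
  have hδv := hδg (⟨x, hx⟩, ⟨‖v‖⁻¹ • v, by simp [norm_smul, hn.ne']⟩)
  obtain ⟨k, hk, hkd⟩ : ∃ k ∈ range (k₀ + 1), δ / (k₀ + 1) ≤
      |∑ i : I, (‖v‖⁻¹ • v) i * iteratedDeriv k (f i) x| := by
    by_contra! hcon
    have := Finset.sum_lt_sum_of_nonempty (by simp) hcon
    rw [Finset.sum_const, card_range, nsmul_eq_mul] at this
    push_cast at this
    rw [mul_div_cancel₀ _ (by positivity)] at this
    exact absurd hδv (not_le.mpr this)
  refine ⟨k, Nat.lt_succ_iff.mp (mem_range.mp hk), fun i hi => ?_⟩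
  rw [hlin x hx]
  have hsum : ∑ i : I, (‖v‖⁻¹ • v) i * iteratedDeriv k (f i) x
      = ‖v‖⁻¹ * ∑ i ∈ I, c i * iteratedDeriv k (f i) x := by
    rw [← Finset.sum_coe_sort I, Finset.mul_sum]
    exact Finset.sum_congr rfl fun i _ => by simp [hv, mul_assoc]
  rw [hsum, abs_mul, abs_of_pos (inv_pos.mpr hn), inv_mul_eq_div, le_div_iff₀ hn] at hkd
  exact (mul_le_mul_of_nonneg_left (norm_le_pi_norm v ⟨i, hi⟩) (by positivity)).trans hkd

end Abstract

section Frequencies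

open Filter Topology Finset

theorem OmG_eq_one_sub_sq {γ : ℝ} (hγ : 0 < γ) : OmG γ = (1 - ((γ - 1) / (γ + 1)) ^ 2) / 4 := by
  unfold OmG
  field_simp
  ring

theorem kap_nonneg (n : ℕ) {γ : ℝ} (hγ : 1 ≤ γ) : 0 ≤ kap n γ :=
  pow_nonneg (div_nonneg (by linarith) (by linarith)) n

theorem OmG_pos {γ : ℝ} (hγ : 0 < γ) : 0 < OmG γ := by
  unfold OmG
  positivity

theorem muM_le_muM {N n : ℕ} (hn : N ≤ n) {γ γ' : ℝ} (hγ : 1 ≤ γ) (hγγ' : γ ≤ γ') :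
    muM N γ' ≤ muM n γ := by
  have h0 : 0 ≤ (γ - 1) / (γ + 1) := div_nonneg (by linarith) (by linarith)
  have h01 : (γ - 1) / (γ + 1) ≤ (γ' - 1) / (γ' + 1) := by
    rw [div_le_div_iff₀ (by linarith) (by linarith)]
    nlinarith
  have h1 : (γ - 1) / (γ + 1) ≤ 1 := by
    rw [div_le_one (by linarith)]
    linarith
  have hk : kap n γ ≤ kap N γ' :=
    (pow_le_pow_of_le_one h0 h1 hn).trans (pow_le_pow_left₀ h0 h01 N)
  have hO : OmG γ' ≤ OmG γ := by
    rw [OmG_eq_one_sub_sq (by linarith), OmG_eq_one_sub_sq (by linarith)]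
    have := pow_le_pow_left₀ h0 h01 2
    linarith
  have hnO : (N : ℝ) * OmG γ' ≤ n * OmG γ :=
    mul_le_mul (by exact_mod_cast hn) hO (OmG_pos (by linarith)).le (by positivity)
  unfold muM
  linarith

theorem muP_mul_muM (n : ℕ) (γ : ℝ) :
    muP n γ * muM n γ = (n * OmG γ - 1 / 2) ^ 2 - kap n γ ^ 2 / 4 := by
  unfold muP muM
  ring

theorem muP_mul_muM_one {γ : ℝ} (hγ : 0 < γ) : muP 1 γ * muM 1 γ = OmG γ ^ 2 := by
  rw [muP_mul_muM, kap, OmG_eq_one_sub_sq hγ]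
  push_cast
  ring

theorem Om_one {γ : ℝ} (hγ : 0 < γ) : Om 1 γ = OmG γ := by
  rw [Om, muP_mul_muM_one hγ, Real.sqrt_sq (OmG_pos hγ).le]

theorem muP_mul_muM_pos {n : ℕ} {γ : ℝ} (hγ : 1 ≤ γ) (h : n = 1 ∨ 0 < muM n γ) :
    0 < muP n γ * muM n γ := by
  rcases h with rfl | h
  · rw [muP_mul_muM_one (by linarith)]
    exact pow_pos (OmG_pos (by linarith)) 2
  · refine mul_pos (lt_of_lt_of_le h ?_) h
    have := kap_nonneg n hγ
    unfold muP muM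
    linarith

theorem analyticAt_OmG {γ : ℝ} (hγ : 0 < γ) : AnalyticAt ℝ OmG γ := by
  unfold OmG
  exact analyticAt_id.div (by fun_prop) (by positivity)

theorem analyticAt_Om {n : ℕ} {γ : ℝ} (hγ : 1 ≤ γ) (h : n = 1 ∨ 0 < muM n γ) :
    AnalyticAt ℝ (Om n) γ := by
  have hO := analyticAt_OmG (γ := γ) (by linarith)
  have hk : AnalyticAt ℝ (kap n) γ := by
    unfold kap
    exact ((analyticAt_id.sub analyticAt_const).div (by fun_prop) (by simp; linarith)).pow n
  have hpos := muP_mul_muM_pos hγ h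
  have hprod : AnalyticAt ℝ (fun x => muP n x * muM n x) γ := by
    unfold muP muM
    fun_prop
  exact (hprod.contDiffAt.sqrt hpos.ne').analyticAt

/-- The difference between the affine frequency `nΩ_γ - 1/2` and `Ω_n`. -/
noncomputable def freqDefect (n : ℕ) (γ : ℝ) : ℝ := n * OmG γ - 1 / 2 - Om n γ

theorem analyticAt_freqDefect {n : ℕ} {γ : ℝ} (hγ : 1 ≤ γ) (h : n = 1 ∨ 0 < muM n γ) :
    AnalyticAt ℝ (freqDefect n) γ := by
  have hO := analyticAt_OmG (γ := γ) (by linarith)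
  have hn := analyticAt_Om hγ h
  unfold freqDefect
  fun_prop

theorem affine_pos {n : ℕ} {γ : ℝ} (hγ : 1 ≤ γ) (h : 0 < muM n γ) : 0 < n * OmG γ - 1 / 2 := by
  have := kap_nonneg n hγ
  unfold muM at h
  linarith

theorem freqDefect_eq {n : ℕ} {γ : ℝ} (hγ : 1 ≤ γ) (h : 0 < muM n γ) :
    freqDefect n γ =
      (((γ - 1) / (γ + 1)) ^ 2) ^ n * (4 * (n * OmG γ - 1 / 2 + Om n γ))⁻¹ := by
  have hA := affine_pos hγ h
  have hO : 0 ≤ Om n γ := Real.sqrt_nonneg _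
  have hsq : Om n γ ^ 2 = (n * OmG γ - 1 / 2) ^ 2 - kap n γ ^ 2 / 4 := by
    rw [Om, Real.sq_sqrt (muP_mul_muM_pos hγ (.inr h)).le, muP_mul_muM]
  have hk : (((γ - 1) / (γ + 1)) ^ 2) ^ n = kap n γ ^ 2 := by
    rw [kap, ← pow_mul, ← pow_mul, mul_comm]
  rw [hk, ← div_eq_mul_inv, eq_div_iff (by positivity), freqDefect]
  linear_combination (-4) * hsq

/-- The constant `1/2` (at index `0`) together with the frequencies `Ω_n`, `n ≥ 1`. -/
noncomputable def freq : ℕ → ℝ → ℝ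
  | 0 => fun _ => 1 / 2
  | n + 1 => Om (n + 1)

theorem freq_of_ne_zero {n : ℕ} (hn : n ≠ 0) : freq n = Om n := by
  obtain ⟨k, rfl⟩ := Nat.exists_eq_succ_of_ne_zero hn
  rfl

/-- The indices `0`, `1` and `N ≤ n < M`. -/
def freqIndex (N M : ℕ) : Finset ℕ := insert 0 (insert 1 (Ico N M))

theorem mem_freqIndex {N M n : ℕ} : n ∈ freqIndex N M ↔ n = 0 ∨ n = 1 ∨ N ≤ n ∧ n < M := by
  simp [freqIndex]

theorem sum_freqIndex {N : ℕ} (hN : 2 ≤ N) (M : ℕ) (g : ℕ → ℝ) :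
    ∑ n ∈ freqIndex N M, g n = g 0 + (g 1 + ∑ n ∈ Ico N M, g n) := by
  unfold freqIndex
  rw [Finset.sum_insert (by simp; omega), Finset.sum_insert (by simp; omega)]

theorem analyticAt_freq {N M n : ℕ} {γ : ℝ} (hγ : 1 ≤ γ) (h : 0 < muM N γ)
    (hn : n ∈ freqIndex N M) : AnalyticAt ℝ (freq n) γ := by
  rcases mem_freqIndex.mp hn with rfl | rfl | ⟨hn, -⟩
  · exact analyticAt_const
  · exact analyticAt_Om hγ (.inl rfl)
  · rcases Nat.eq_zero_or_pos n with rfl | h0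
    · exact analyticAt_const
    · rw [freq_of_ne_zero h0.ne']
      exact analyticAt_Om hγ (.inr (h.trans_le (muM_le_muM hn hγ le_rfl)))

/-- Linear independence of `1`, `Ω_1` and the `Ω_n`, read off from their expansions at `γ = 1`. -/
theorem coeff_eq_zero_of_sum_freq_eq_zero {N M : ℕ} (hN : 3 ≤ N) {γ₂ : ℝ} (hγ₂ : 1 < γ₂)
    (hmu : 0 < muM N γ₂) {c : ℕ → ℝ}
    (hc : ∀ γ ∈ Set.Icc 1 γ₂, ∑ n ∈ freqIndex N M, c n * freq n γ = 0) :
    ∀ n ∈ freqIndex N M, c n = 0 := by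
  have hpos : ∀ n, N ≤ n → ∀ γ ∈ Set.Icc 1 γ₂, 0 < muM n γ := fun n hn γ hγ =>
    hmu.trans_le (muM_le_muM hn hγ.1 hγ.2)
  set d : ℕ → ℝ := fun n =>
    if n = 0 then c 0 / 2 + c 1 / 4 + ∑ k ∈ Ico N M, c k * (k / 4 - 1 / 2)
    else if n = 1 then -(c 1 / 4) - ∑ k ∈ Ico N M, c k * (k / 4)
    else -c n with hd
  set h : ℕ → ℝ → ℝ := fun n γ =>
    if n = 0 ∨ n = 1 then 1 else (4 * (n * OmG γ - 1 / 2 + Om n γ))⁻¹ with hh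
  have hone : (1 : ℝ) ∈ Set.Icc 1 γ₂ := ⟨le_rfl, hγ₂.le⟩
  have hden : ∀ n, N ≤ n → 0 < 4 * (n * OmG 1 - 1 / 2 + Om n 1) := fun n hn => by
    have := affine_pos le_rfl (hpos n hn 1 hone)
    have : 0 ≤ Om n 1 := Real.sqrt_nonneg _
    positivity
  have hzero := coeff_eq_zero_of_sum_pow_mul_eventuallyEq_zero (l := 𝓝[>] (1 : ℝ))
    (y := fun γ => ((γ - 1) / (γ + 1)) ^ 2) (h := h) (H := fun n => h n 1)
    (J := freqIndex N M) (c := d)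
    (by
      have : ContinuousAt (fun γ : ℝ => ((γ - 1) / (γ + 1)) ^ 2) 1 := by
        have : (1 : ℝ) + 1 ≠ 0 := by norm_num
        fun_prop (disch := assumption)
      have h := this.tendsto.mono_left (nhdsWithin_le_nhds (s := Set.Ioi 1))
      simpa using h)
    (by
      filter_upwards [self_mem_nhdsWithin] with γ hγ
      have hγ : (1 : ℝ) < γ := hγ
      exact pow_ne_zero _ (div_ne_zero (by linarith) (by linarith)))
    (by
      intro n hn
      refine Tendsto.mono_left (ContinuousAt.tendsto ?_) nhdsWithin_le_nhds
      by_cases hn01 : n = 0 ∨ n = 1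
      · simpa only [hh, hn01, if_true] using continuousAt_const
      · have hNn : N ≤ n := by
          rcases mem_freqIndex.mp hn with h | h | h
          · exact absurd (.inl h) hn01
          · exact absurd (.inr h) hn01
          · exact h.1
        simp only [hh, hn01, if_false]
        have h1 := (analyticAt_OmG (γ := 1) one_pos).continuousAt
        have h2 := (analyticAt_Om le_rfl (.inr (hpos n hNn 1 hone))).continuousAt
        exact ContinuousAt.inv₀ (by fun_prop) (hden n hNn).ne')
    (by
      intro n hn
      rcases mem_freqIndex.mp hn with rfl | rfl | ⟨hNn, -⟩
      · simp [hh]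
      · simp [hh]
      · simp only [hh, show ¬(n = 0 ∨ n = 1) by omega, if_false]
        exact inv_ne_zero (hden n hNn).ne')
    (by
      filter_upwards [Ioc_mem_nhdsGT hγ₂] with γ hγ
      have hγ' : γ ∈ Set.Icc 1 γ₂ := ⟨hγ.1.le, hγ.2⟩
      rw [← hc γ hγ', sum_freqIndex (by omega), sum_freqIndex (by omega)]
      have hterm : ∑ n ∈ Ico N M, d n * ((((γ - 1) / (γ + 1)) ^ 2) ^ n * h n γ)
          = ∑ n ∈ Ico N M, (c n * freq n γ - c n * (n / 4 - 1 / 2)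
              + ((γ - 1) / (γ + 1)) ^ 2 * (c n * (n / 4))) := by
        refine Finset.sum_congr rfl fun n hn => ?_
        have hNn := (mem_Ico.mp hn).1
        have hdef := freqDefect_eq hγ'.1 (hpos n hNn γ hγ')
        simp only [hd, hh, show n ≠ 0 by omega, show n ≠ 1 by omega, if_false, or_self]
        rw [← hdef, freqDefect, freq_of_ne_zero (by omega), OmG_eq_one_sub_sq (by linarith [hγ.1])]
        ring
      rw [hterm, Finset.sum_add_distrib, Finset.sum_sub_distrib, ← Finset.mul_sum]
      rw [freq_of_ne_zero one_ne_zero, Om_one (by linarith [hγ.1]),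
        OmG_eq_one_sub_sq (by linarith [hγ.1])]
      simp only [hd, hh, freq]
      simp
      ring)
  have hbig : ∀ n ∈ Ico N M, c n = 0 := by
    intro n hn
    have hNn := mem_Ico.mp hn
    have := hzero n (mem_freqIndex.mpr (.inr (.inr hNn)))
    simpa [hd, show n ≠ 0 by omega, show n ≠ 1 by omega] using this
  have h0 := hzero 0 (mem_freqIndex.mpr (.inl rfl))
  have h1 := hzero 1 (mem_freqIndex.mpr (.inr (.inl rfl)))
  have hs : ∀ g : ℕ → ℝ, ∑ k ∈ Ico N M, c k * g k = 0 := fun g =>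
    Finset.sum_eq_zero fun k hk => by simp [hbig k hk]
  simp only [hd, if_true, one_ne_zero, if_false] at h0 h1
  rw [hs fun k => (k / 4 - 1 / 2 : ℝ)] at h0
  rw [hs fun k => (k / 4 : ℝ)] at h1
  intro n hn
  rcases mem_freqIndex.mp hn with rfl | rfl | hn
  · linarith
  · linarith
  · exact hbig n (mem_Ico.mpr hn)

/-- Quantitative transversality for finitely many of the functions `freq n`. -/
theorem exists_le_abs_iteratedDeriv_sum_freq {N : ℕ} (hN : 3 ≤ N) {γ₁ γ₂ : ℝ} (hγ₁ : 1 < γ₁)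
    (hγ₁₂ : γ₁ ≤ γ₂) (hmu : 0 < muM N γ₂) (M : ℕ) :
    ∃ (k₀ : ℕ) (ρ : ℝ), 0 < ρ ∧ ∀ γ ∈ Set.Icc γ₁ γ₂, ∀ c : ℕ → ℝ, ∃ k ≤ k₀,
      ∀ n ∈ freqIndex N M,
        ρ * |c n| ≤ |iteratedDeriv k (fun x => ∑ n ∈ freqIndex N M, c n * freq n x) γ| := by
  have han : ∀ n ∈ freqIndex N M, ∀ γ ∈ Set.Icc 1 γ₂, AnalyticAt ℝ (freq n) γ :=
    fun n hn γ hγ => analyticAt_freq hγ.1 (hmu.trans_le (muM_le_muM le_rfl hγ.1 hγ.2)) hn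
  have hsub : Set.Icc γ₁ γ₂ ⊆ Set.Icc 1 γ₂ := Set.Icc_subset_Icc_left hγ₁.le
  refine exists_le_abs_iteratedDeriv_sum isCompact_Icc
    (fun n hn γ hγ => han n hn γ (hsub hγ)) fun γ hγ c hk => ?_
  have hsum : AnalyticOnNhd ℝ (fun x => ∑ n ∈ freqIndex N M, c n * freq n x) (Set.Icc 1 γ₂) :=
    fun x hx => Finset.analyticAt_fun_sum _ fun n hn => analyticAt_const.mul (han n hn x hx)
  exact coeff_eq_zero_of_sum_freq_eq_zero hN (hγ₁.trans_le hγ₁₂) hmu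
    (hsum.eqOn_zero_of_preconnected_of_eventuallyEq_zero isPreconnected_Icc (hsub hγ)
      ((hsum γ (hsub hγ)).eventually_eq_zero_of_iteratedDeriv_eq_zero hk))

end Frequencies

section Defect

open Filter Topology Finset

theorem norm_one_sub_cpow_inv_two_le (w : ℂ) : ‖1 - (1 - w) ^ (2⁻¹ : ℂ)‖ ≤ ‖w‖ := by
  set s : ℂ := (1 - w) ^ (2⁻¹ : ℂ) with hs
  have hsq : s ^ 2 = 1 - w := by
    simp [hs]
  have hre : 0 ≤ s.re := by
    rw [hs, Complex.cpow_inv_two_re]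
    exact Real.sqrt_nonneg _
  have hone : 1 ≤ ‖1 + s‖ := by
    refine le_trans ?_ (Complex.re_le_norm _)
    simpa using hre
  have hw : w = (1 - s) * (1 + s) := by linear_combination hsq
  calc ‖1 - s‖ ≤ ‖1 - s‖ * ‖1 + s‖ := le_mul_of_one_le_right (norm_nonneg _) hone
    _ = ‖w‖ := by rw [← norm_mul, ← hw]

theorem norm_cayley_sq_le {γ γ₂ : ℝ} (hγ : 1 ≤ γ) (hγ₂ : γ ≤ γ₂) {z : ℂ}
    (hz : ‖z - γ‖ ≤ 1 / 2) :
    z + 1 ≠ 0 ∧ ‖(z - 1) / (z + 1)‖ ^ 2 ≤ 1 - 2 / (γ₂ + 2) ^ 2 := by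
  have hre : 1 / 2 ≤ z.re := by
    have := (Complex.abs_re_le_norm (z - γ)).trans hz
    simp only [Complex.sub_re, Complex.ofReal_re] at this
    linarith [(abs_le.mp this).1]
  have hne : z + 1 ≠ 0 := fun h => by
    have := congrArg Complex.re h
    simp at this
    linarith
  have hle : ‖z + 1‖ ≤ γ₂ + 2 := by
    have h1 : z + 1 = (z - γ) + ((γ + 1 : ℝ) : ℂ) := by push_cast; ring
    rw [h1]
    refine (norm_add_le _ _).trans ?_
    rw [Complex.norm_real, Real.norm_of_nonneg (by linarith)]
    linarith
  have hid : ‖z - 1‖ ^ 2 = ‖z + 1‖ ^ 2 - 4 * z.re := by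
    rw [Complex.sq_norm, Complex.sq_norm, Complex.normSq_apply, Complex.normSq_apply]
    simp
    ring
  have hpos : 0 < ‖z + 1‖ := norm_pos_iff.mpr hne
  refine ⟨hne, ?_⟩
  rw [norm_div, div_pow, hid, sub_div, div_self (by positivity)]
  gcongr
  linarith

/-- Holomorphic extension of `n Ω_γ - 1/2`. -/
noncomputable def affineC (n : ℕ) (z : ℂ) : ℂ := n * ((1 - ((z - 1) / (z + 1)) ^ 2) / 4) - 1 / 2

/-- Holomorphic extension of `κ_n² / (4 (n Ω_γ - 1/2)²)`. -/
noncomputable def ratioC (n : ℕ) (z : ℂ) : ℂ :=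
  (((z - 1) / (z + 1)) ^ 2) ^ n / (4 * affineC n z ^ 2)

/-- Holomorphic extension of `freqDefect n`. -/
noncomputable def freqDefectC (n : ℕ) (z : ℂ) : ℂ :=
  affineC n z * (1 - (1 - ratioC n z) ^ (2⁻¹ : ℂ))

theorem one_le_re_affineC {γ₂ : ℝ} (hγ₂ : 1 ≤ γ₂) {n : ℕ} (hn : 3 * (γ₂ + 2) ^ 2 ≤ n) {z : ℂ}
    (hz : ‖(z - 1) / (z + 1)‖ ^ 2 ≤ 1 - 2 / (γ₂ + 2) ^ 2) : 1 ≤ (affineC n z).re := by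
  set x := (z - 1) / (z + 1)
  have hx : (x ^ 2).re ≤ 1 - 2 / (γ₂ + 2) ^ 2 :=
    (Complex.re_le_norm _).trans (by rwa [norm_pow])
  have hre : (affineC n z).re = n * ((1 - (x ^ 2).re) / 4) - 1 / 2 := by
    have : affineC n z = ((n / 4 : ℝ) : ℂ) * (1 - x ^ 2) - ((1 / 2 : ℝ) : ℂ) := by
      simp only [affineC]
      push_cast
      ring
    rw [this, Complex.sub_re, Complex.re_ofReal_mul, Complex.ofReal_re, Complex.sub_re,
      Complex.one_re]
    ring
  have h1 : 3 * (γ₂ + 2) ^ 2 * (2 / (γ₂ + 2) ^ 2) ≤ n * (1 - (x ^ 2).re) :=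
    mul_le_mul hn (by linarith) (by positivity) (by positivity)
  have h2 : 3 * (γ₂ + 2) ^ 2 * (2 / (γ₂ + 2) ^ 2) = 6 := by
    field_simp
    norm_num
  rw [hre]
  linarith

theorem norm_ratioC_le {γ₂ : ℝ} (hγ₂ : 1 ≤ γ₂) {n : ℕ} (hn : 3 * (γ₂ + 2) ^ 2 ≤ n) {z : ℂ}
    (hz : ‖(z - 1) / (z + 1)‖ ^ 2 ≤ 1 - 2 / (γ₂ + 2) ^ 2) : ‖ratioC n z‖ ≤ 1 / 4 := by
  have hA := (one_le_re_affineC hγ₂ hn hz).trans (Complex.re_le_norm _)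
  rw [ratioC, norm_div, norm_mul, norm_pow, norm_pow, norm_pow]
  have h1 : (‖(z - 1) / (z + 1)‖ ^ 2) ^ n ≤ 1 := by
    refine pow_le_one₀ (by positivity) (hz.trans ?_)
    have : 0 ≤ 2 / (γ₂ + 2) ^ 2 := by positivity
    linarith
  have h2 : 1 ≤ ‖affineC n z‖ ^ 2 := one_le_pow₀ hA
  rw [Complex.norm_ofNat, div_le_iff₀ (by positivity)]
  linarith

theorem norm_freqDefectC_le {γ₂ : ℝ} (hγ₂ : 1 ≤ γ₂) {n : ℕ} (hn : 3 * (γ₂ + 2) ^ 2 ≤ n) {z : ℂ}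
    (hz : ‖(z - 1) / (z + 1)‖ ^ 2 ≤ 1 - 2 / (γ₂ + 2) ^ 2) :
    ‖freqDefectC n z‖ ≤ (1 - 2 / (γ₂ + 2) ^ 2) ^ n := by
  have hA := (one_le_re_affineC hγ₂ hn hz).trans (Complex.re_le_norm _)
  have hA0 : 0 < ‖affineC n z‖ := one_pos.trans_le hA
  calc ‖freqDefectC n z‖ ≤ ‖affineC n z‖ * ‖ratioC n z‖ := by
        rw [freqDefectC, norm_mul]
        exact mul_le_mul_of_nonneg_left (norm_one_sub_cpow_inv_two_le _) (norm_nonneg _)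
    _ = (‖(z - 1) / (z + 1)‖ ^ 2) ^ n / (4 * ‖affineC n z‖) := by
        rw [ratioC, norm_div, norm_mul, norm_pow, norm_pow, norm_pow]
        simp
        field_simp
    _ ≤ (‖(z - 1) / (z + 1)‖ ^ 2) ^ n := div_le_self (by positivity) (by linarith)
    _ ≤ _ := pow_le_pow_left₀ (by positivity) hz n

theorem differentiableAt_freqDefectC {γ₂ : ℝ} (hγ₂ : 1 ≤ γ₂) {n : ℕ}
    (hn : 3 * (γ₂ + 2) ^ 2 ≤ n) {z : ℂ} (hz1 : z + 1 ≠ 0)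
    (hz : ‖(z - 1) / (z + 1)‖ ^ 2 ≤ 1 - 2 / (γ₂ + 2) ^ 2) :
    DifferentiableAt ℂ (freqDefectC n) z := by
  have hA0 : affineC n z ≠ 0 := fun h => by
    have := one_le_re_affineC hγ₂ hn hz
    simp [h] at this
    linarith
  have hA : DifferentiableAt ℂ (affineC n) z := by
    unfold affineC
    fun_prop (disch := assumption)
  have hR : DifferentiableAt ℂ (ratioC n) z := by
    unfold ratioC
    have : 4 * affineC n z ^ 2 ≠ 0 := by simp [hA0]
    fun_prop (disch := assumption)
  have hslit : 1 - ratioC n z ∈ Complex.slitPlane := by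
    left
    have := (Complex.re_le_norm _).trans (norm_ratioC_le hγ₂ hn hz)
    simp
    linarith
  exact hA.mul ((differentiableAt_const _).sub
    (((differentiableAt_const _).sub hR).cpow (differentiableAt_const _) hslit))

theorem freqDefectC_ofReal {γ₂ : ℝ} (hγ₂ : 1 ≤ γ₂) {n : ℕ} (hn : 3 * (γ₂ + 2) ^ 2 ≤ n) {x : ℝ}
    (hx0 : 0 < x) (hx : ‖((x : ℂ) - 1) / (x + 1)‖ ^ 2 ≤ 1 - 2 / (γ₂ + 2) ^ 2) :
    freqDefectC n x = (freqDefect n x : ℝ) := by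
  have hA := one_le_re_affineC hγ₂ hn hx
  have hR := norm_ratioC_le hγ₂ hn hx
  have hAr : affineC n x = ((n * OmG x - 1 / 2 : ℝ) : ℂ) := by
    rw [OmG_eq_one_sub_sq hx0, affineC]
    push_cast
    ring
  rw [hAr, Complex.ofReal_re] at hA
  have hRr : ratioC n x = ((kap n x ^ 2 / (4 * (n * OmG x - 1 / 2) ^ 2) : ℝ) : ℂ) := by
    rw [ratioC, hAr, kap, ← pow_mul, ← pow_mul, mul_comm 2 n]
    push_cast
    ring
  rw [hRr, Complex.norm_real, Real.norm_eq_abs] at hR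
  have hR' := (le_abs_self _).trans hR
  set A := n * OmG x - 1 / 2 with hAdef
  set w := kap n x ^ 2 / (4 * A ^ 2) with hw
  have hsqrt : (1 - (w : ℂ)) ^ (2⁻¹ : ℂ) = (√(1 - w) : ℝ) := by
    rw [Real.sqrt_eq_rpow, Complex.ofReal_cpow (by linarith)]
    push_cast
    norm_num
  have hOm : Om n x = A * √(1 - w) := by
    rw [Om, muP_mul_muM, ← hAdef]
    nth_rewrite 2 [← Real.sqrt_sq (show 0 ≤ A by linarith)]
    rw [← Real.sqrt_mul (sq_nonneg A)]
    congr 1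
    have : A ≠ 0 := by linarith
    rw [hw]
    field_simp
  rw [freqDefectC, hAr, hRr, hsqrt, freqDefect, hOm, ← hAdef]
  push_cast
  ring

/-- All derivatives of `freqDefect n` tend to zero uniformly as `n → ∞`. -/
theorem exists_abs_iteratedDeriv_freqDefect_le {γ₂ : ℝ} (hγ₂ : 1 ≤ γ₂) (k₀ : ℕ) {ε : ℝ}
    (hε : 0 < ε) :
    ∃ N : ℕ, ∀ n ≥ N, ∀ γ ∈ Set.Icc 1 γ₂, ∀ k ≤ k₀, |iteratedDeriv k (freqDefect n) γ| ≤ ε := by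
  set q : ℝ := 1 - 2 / (γ₂ + 2) ^ 2 with hq
  have hq1 : q < 1 := by
    have : 0 < 2 / (γ₂ + 2) ^ 2 := by positivity
    linarith
  have hq0 : 0 ≤ q := by
    rw [hq, sub_nonneg, div_le_one (by positivity)]
    nlinarith
  have hlim : Tendsto (fun n : ℕ => k₀.factorial * 2 ^ k₀ * q ^ n) atTop (𝓝 0) := by
    simpa using (tendsto_pow_atTop_nhds_zero_of_lt_one hq0 hq1).const_mul
      ((k₀.factorial : ℝ) * 2 ^ k₀)
  obtain ⟨N₁, hN₁⟩ := eventually_atTop.mp (hlim.eventually (gt_mem_nhds hε))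
  refine ⟨max N₁ ⌈3 * (γ₂ + 2) ^ 2⌉₊, fun n hn γ hγ k hk => ?_⟩
  have hn3 : 3 * (γ₂ + 2) ^ 2 ≤ n := Nat.ceil_le.mp ((le_max_right _ _).trans hn)
  have hball : ∀ z ∈ Metric.closedBall (γ : ℂ) (1 / 2), _ := fun z hz =>
    norm_cayley_sq_le hγ.1 hγ.2 (mem_closedBall_iff_norm.mp hz)
  have hdiff : DifferentiableOn ℂ (freqDefectC n) (Metric.closedBall (γ : ℂ) (1 / 2)) :=
    fun z hz => (differentiableAt_freqDefectC hγ₂ hn3 (hball z hz).1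
      (hball z hz).2).differentiableWithinAt
  have hcauchy := Complex.norm_iteratedDeriv_le_of_forall_mem_sphere_norm_le k
    (by norm_num : (0 : ℝ) < 1 / 2) (hdiff.diffContOnCl_ball subset_rfl)
    fun z hz => norm_freqDefectC_le hγ₂ hn3 (hball z (Metric.sphere_subset_closedBall hz)).2
  have hreal : ∀ᶠ y : ℝ in 𝓝 γ, freqDefectC n y = (freqDefect n y : ℝ) := by
    filter_upwards [Metric.closedBall_mem_nhds γ (by norm_num : (0 : ℝ) < 1 / 2)] with y hy
    have hy' : |y - γ| ≤ 1 / 2 := by simpa [Real.dist_eq] using hy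
    refine freqDefectC_ofReal hγ₂ hn3 (by linarith [(abs_le.mp hy').1, hγ.1])
      (hball y (mem_closedBall_iff_norm.mpr ?_)).2
    rw [← Complex.ofReal_sub, Complex.norm_real]
    exact hy'
  have heq := (eventually_ofReal_iteratedDeriv_eq (hdiff.analyticAt
    (Metric.closedBall_mem_nhds _ (by norm_num))) hreal k).self_of_nhds
  rw [heq, Complex.norm_real] at hcauchy
  refine hcauchy.trans (le_trans ?_ (hN₁ n ((le_max_left _ _).trans hn)).le)
  have hkf : (k.factorial : ℝ) ≤ k₀.factorial := by exact_mod_cast Nat.factorial_le hk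
  have hk2 : (2 : ℝ) ^ k ≤ 2 ^ k₀ := pow_le_pow_right₀ one_le_two hk
  calc (k.factorial : ℝ) * q ^ n / (1 / 2) ^ k = k.factorial * 2 ^ k * q ^ n := by
        rw [one_div, inv_pow, div_inv_eq_mul]
        ring
    _ ≤ k₀.factorial * 2 ^ k₀ * q ^ n := by gcongr

end Defect

section Transversality

open Filter Topology Finset

theorem mul_brk_le {m : ℕ} {ℓ : Fin m → ℤ} {ρ D : ℝ} (hρ : 0 ≤ ρ) (h1 : ρ ≤ D)
    (h : ∀ i, ρ * |(ℓ i : ℝ)| ≤ D) : ρ * brk ℓ ≤ D := by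
  rw [brk, mul_max_of_nonneg _ _ hρ, mul_one]
  refine max_le h1 ?_
  obtain hem | hne := (Finset.univ : Finset (Fin m)).eq_empty_or_nonempty
  · rw [hem]
    simpa using hρ.trans h1
  · obtain ⟨i, -, hi⟩ := Finset.exists_mem_eq_sup _ hne fun i => (ℓ i).natAbs
    rw [hi, Nat.cast_natAbs, Int.cast_abs]
    exact h i

/-- A combination of finitely many frequencies, perturbed by two frequency defects of high index,
is bounded below up to finitely many derivatives. -/
theorem exists_mul_brk_le_abs_iteratedDeriv {N : ℕ} (hN : 3 ≤ N) {γ₁ γ₂ : ℝ} (hγ₁ : 1 < γ₁)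
    (hγ₁₂ : γ₁ ≤ γ₂) (hmu : 0 < muM N γ₂) {m : ℕ} (S : Fin m → ℕ) (M : ℕ)
    (hS : ∀ i, S i ∈ freqIndex N M) :
    ∃ (k₀ : ℕ) (ρ : ℝ) (T : ℕ), 0 < ρ ∧ ∀ γ ∈ Set.Icc γ₁ γ₂,
      ∀ (ℓ : Fin m → ℤ) (c : ℕ → ℤ) (a b : ℤ) (n n' : ℕ) (g : ℝ → ℝ),
        T ≤ n → T ≤ n' → |a| ≤ 1 → |b| ≤ 1 →
        (∀ᶠ x in 𝓝 γ, g x = ∑ k ∈ freqIndex N M, (c k : ℝ) * freq k x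
          + (-(a : ℝ) * freqDefect n x + -(b : ℝ) * freqDefect n' x)) →
        (∀ i, c (S i) = ℓ i) → (ℓ = 0 → ∃ k ∈ freqIndex N M, c k ≠ 0) →
        ∃ k ≤ k₀, ρ * brk ℓ ≤ |iteratedDeriv k g γ| := by
  obtain ⟨k₀, ρ, hρ, hcore⟩ := exists_le_abs_iteratedDeriv_sum_freq hN hγ₁ hγ₁₂ hmu M
  obtain ⟨T, hT⟩ := exists_abs_iteratedDeriv_freqDefect_le (hγ₁.le.trans hγ₁₂) k₀
    (show 0 < ρ / 4 by positivity)
  refine ⟨k₀, ρ / 2, max T N, by positivity, ?_⟩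
  intro γ hγ ℓ c a b n n' g hn hn' ha hb hg hcS hc
  have hγ1 : γ ∈ Set.Icc 1 γ₂ := ⟨hγ₁.le.trans hγ.1, hγ.2⟩
  have hmuγ : ∀ k, N ≤ k → 0 < muM k γ := fun k hk => hmu.trans_le (muM_le_muM hk hγ1.1 hγ1.2)
  obtain ⟨k, hk, hlow⟩ := hcore γ hγ fun k => (c k : ℝ)
  refine ⟨k, hk, ?_⟩
  have hsum : AnalyticAt ℝ (fun x => ∑ k ∈ freqIndex N M, (c k : ℝ) * freq k x) γ :=
    Finset.analyticAt_fun_sum _ fun k hk =>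
      analyticAt_const.mul (analyticAt_freq hγ1.1 (hmuγ N le_rfl) hk)
  have hr : AnalyticAt ℝ (freqDefect n) γ :=
    analyticAt_freqDefect hγ1.1 (.inr (hmuγ n ((le_max_right _ _).trans hn)))
  have hr' : AnalyticAt ℝ (freqDefect n') γ :=
    analyticAt_freqDefect hγ1.1 (.inr (hmuγ n' ((le_max_right _ _).trans hn')))
  have hbound : ∀ {a : ℤ}, |a| ≤ 1 → ∀ d : ℝ, |d| ≤ ρ / 4 → |-(a : ℝ) * d| ≤ ρ / 4 := by
    intro a ha d hd
    have ha' : |(a : ℝ)| ≤ 1 := by exact_mod_cast ha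
    rw [abs_mul, abs_neg]
    exact (mul_le_of_le_one_left (abs_nonneg d) ha').trans hd
  have hE := hbound ha _ (hT n ((le_max_left _ _).trans hn) γ hγ1 k hk)
  have hE' := hbound hb _ (hT n' ((le_max_left _ _).trans hn') γ hγ1 k hk)
  have hra : AnalyticAt ℝ (fun x => -(a : ℝ) * freqDefect n x) γ := analyticAt_const.mul hr
  have hrb : AnalyticAt ℝ (fun x => -(b : ℝ) * freqDefect n' x) γ := analyticAt_const.mul hr'
  have hD : iteratedDeriv k g γ
      = iteratedDeriv k (fun x => ∑ k ∈ freqIndex N M, (c k : ℝ) * freq k x) γ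
        + (-(a : ℝ) * iteratedDeriv k (freqDefect n) γ
          + -(b : ℝ) * iteratedDeriv k (freqDefect n') γ) := by
    rw [Filter.EventuallyEq.iteratedDeriv_eq k hg, iteratedDeriv_fun_add hsum.contDiffAt
      (hra.contDiffAt.add hrb.contDiffAt), iteratedDeriv_fun_add hra.contDiffAt hrb.contDiffAt,
      iteratedDeriv_const_mul _ hr.contDiffAt, iteratedDeriv_const_mul _ hr'.contDiffAt]
  obtain ⟨j, hj, hcj⟩ : ∃ k ∈ freqIndex N M, c k ≠ 0 := by
    by_cases hℓ : ℓ = 0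
    · exact hc hℓ
    · obtain ⟨i, hi⟩ := Function.ne_iff.mp hℓ
      exact ⟨S i, hS i, by rw [hcS]; exact hi⟩
  have hone : ρ ≤ |iteratedDeriv k (fun x => ∑ k ∈ freqIndex N M, (c k : ℝ) * freq k x) γ| := by
    have : (1 : ℝ) ≤ |(c j : ℝ)| := by exact_mod_cast Int.one_le_abs hcj
    exact (le_mul_of_one_le_right hρ.le this).trans (hlow j hj)
  have hmain : |iteratedDeriv k (fun x => ∑ k ∈ freqIndex N M, (c k : ℝ) * freq k x) γ| - ρ / 2
      ≤ |iteratedDeriv k g γ| := by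
    rw [hD]
    set D := iteratedDeriv k (fun x => ∑ k ∈ freqIndex N M, (c k : ℝ) * freq k x) γ
    set E := -(a : ℝ) * iteratedDeriv k (freqDefect n) γ
    set E' := -(b : ℝ) * iteratedDeriv k (freqDefect n') γ
    have h1 := abs_sub_abs_le_abs_sub D (-(E + E'))
    rw [abs_neg, sub_neg_eq_add] at h1
    have h2 := abs_add_le E E'
    linarith
  refine mul_brk_le (by positivity) (by linarith) fun i => ?_
  have := hlow (S i) (hS i)
  rw [hcS] at this
  linarith

/-- Integer coefficients on `ℕ`: those of `ℓ` on the sites `S`, plus three further entries. -/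
def siteCoeff {m : ℕ} (S : Fin m → ℕ) (ℓ : Fin m → ℤ) (p q r : ℕ) (a b d : ℤ) (k : ℕ) : ℤ :=
  (∑ i, if k = S i then ℓ i else 0) + (if k = p then a else 0) + (if k = q then b else 0)
    + (if k = r then d else 0)

theorem siteCoeff_site {m : ℕ} {S : Fin m → ℕ} (hS : Function.Injective S) (ℓ : Fin m → ℤ)
    {p q r : ℕ} (a b d : ℤ) (i : Fin m) (hp : S i ≠ p) (hq : S i ≠ q) (hr : S i ≠ r) :
    siteCoeff S ℓ p q r a b d (S i) = ℓ i := by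
  simp [siteCoeff, hp, hq, hr, hS.eq_iff]

theorem siteCoeff_zero {m : ℕ} (S : Fin m → ℕ) (p q r : ℕ) (a b d : ℤ) (k : ℕ) :
    siteCoeff S 0 p q r a b d k = (if k = p then a else 0) + (if k = q then b else 0)
      + (if k = r then d else 0) := by
  simp [siteCoeff]

theorem sum_siteCoeff_mul_freq {m : ℕ} {S : Fin m → ℕ} {I : Finset ℕ} (hS : ∀ i, S i ∈ I)
    (hS0 : ∀ i, S i ≠ 0) (ℓ : Fin m → ℤ) {p q r : ℕ} (hp : p ∈ I) (hq : q ∈ I) (hr : r ∈ I)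
    (a b d : ℤ) (x : ℝ) :
    ∑ k ∈ I, (siteCoeff S ℓ p q r a b d k : ℝ) * freq k x
      = (∑ i, (ℓ i : ℝ) * Om (S i) x) + a * freq p x + b * freq q x + d * freq r x := by
  have hsites : ∑ k ∈ I, (∑ i, if k = S i then (ℓ i : ℝ) else 0) * freq k x
      = ∑ i, (ℓ i : ℝ) * Om (S i) x := by
    simp_rw [Finset.sum_mul]
    rw [Finset.sum_comm]
    refine Finset.sum_congr rfl fun i _ => ?_
    simp [ite_mul, hS i, freq_of_ne_zero (hS0 i)]
  simp only [siteCoeff]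
  push_cast
  simp only [add_mul, Finset.sum_add_distrib, hsites]
  simp [ite_mul, hp, hq, hr]

/-- Transversality for combinations of the tangential frequencies with two normal ones. -/
theorem exists_mul_brk_le_two_modes {N : ℕ} (hN : 3 ≤ N) {γ₁ γ₂ : ℝ} (hγ₁ : 1 < γ₁)
    (hγ₁₂ : γ₁ ≤ γ₂) (hmu : 0 < muM N γ₂) {m : ℕ} {S : Fin m → ℕ} (hS : Function.Injective S)
    (hSlow : ∀ i, N ≤ S i) :
    ∃ (k₀ : ℕ) (ρ : ℝ), 0 < ρ ∧ ∀ γ ∈ Set.Icc γ₁ γ₂,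
      ∀ (ℓ : Fin m → ℤ) (σ τ : ℤ) (n n' : ℕ), |σ| ≤ 1 → |τ| ≤ 1 →
        (n = 1 ∨ N ≤ n) → (∀ i, S i ≠ n) → (n' = 1 ∨ N ≤ n') → (∀ i, S i ≠ n') →
        (ℓ = 0 → (n = n' → σ + τ ≠ 0) ∧ (n ≠ n' → σ ≠ 0 ∨ τ ≠ 0)) →
        ∃ k ≤ k₀, ρ * brk ℓ ≤ |iteratedDeriv k
          (fun x => (∑ i, (ℓ i : ℝ) * Om (S i) x) + σ * Om n x + τ * Om n' x) γ| := by
  have hstage := exists_mul_brk_le_abs_iteratedDeriv hN hγ₁ hγ₁₂ hmu S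
  have hSM : ∀ i, S i < univ.sup S + 1 := fun i =>
    Nat.lt_succ_of_le (Finset.le_sup (f := S) (mem_univ i))
  have hSI : ∀ {M}, univ.sup S + 1 ≤ M → ∀ i, S i ∈ freqIndex N M := fun hM i =>
    mem_freqIndex.mpr (.inr (.inr ⟨hSlow i, (hSM i).trans_le hM⟩))
  -- Thresholds: `M₁` beyond which two defects are negligible against the tangential sites, and
  -- `M₂` beyond which one defect is negligible against all modes below `M₁`.
  obtain ⟨k₁, ρ₁, T₁, hρ₁, h₁⟩ := hstage _ (hSI le_rfl)
  set M₁ := max (univ.sup S + 1) T₁ with hM₁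
  obtain ⟨k₂, ρ₂, T₂, hρ₂, h₂⟩ := hstage M₁ (hSI (le_max_left _ _))
  set M₂ := max M₁ T₂ with hM₂
  obtain ⟨k₃, ρ₃, T₃, hρ₃, h₃⟩ := hstage M₂ (hSI ((le_max_left _ _).trans (le_max_left _ _)))
  have h0I : ∀ {M}, 0 ∈ freqIndex N M := mem_freqIndex.mpr (.inl rfl)
  have h1I : ∀ {M}, 1 ∈ freqIndex N M := mem_freqIndex.mpr (.inr (.inl rfl))
  have hS0 : ∀ i, S i ≠ 0 := fun i => by have := hSlow i; omega
  have hS1 : ∀ i, S i ≠ 1 := fun i => by have := hSlow i; omega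
  refine ⟨max k₁ (max k₂ k₃), min ρ₁ (min ρ₂ ρ₃), by positivity, ?_⟩
  intro γ hγ ℓ σ τ n n' hσ hτ hn hSn hn' hSn' hne
  wlog hle : n' ≤ n generalizing σ τ n n'
  · have := this τ σ n' n hτ hσ hn' hSn' hn hSn
      (fun h => ⟨fun e => by rw [add_comm]; exact (hne h).1 e.symm,
        fun e => ((hne h).2 e.symm).symm⟩) (by omega)
    simpa only [add_right_comm] using this
  have hb0 : 0 ≤ brk ℓ := zero_le_one.trans (le_max_left _ _)
  have hOm : ∀ k : ℕ, ∀ᶠ x in 𝓝 γ, Om k x = k * freq 1 x - freq 0 x - freqDefect k x := by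
    intro k
    filter_upwards [lt_mem_nhds (show (0 : ℝ) < γ by linarith [hγ.1])] with x hx
    rw [freq_of_ne_zero one_ne_zero, Om_one hx, freqDefect, freq]
    ring
  rcases lt_or_ge n M₂ with hnM | hnM
  · have hnI : n ∈ freqIndex N M₂ := mem_freqIndex.mpr (.inr (hn.imp_right fun h => ⟨h, hnM⟩))
    have hnI' : n' ∈ freqIndex N M₂ :=
      mem_freqIndex.mpr (.inr (hn'.imp_right fun h => ⟨h, by omega⟩))
    obtain ⟨k, hk, hkρ⟩ := h₃ γ hγ ℓ (siteCoeff S ℓ n n' 0 σ τ 0) 0 0 T₃ T₃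
      (fun x => (∑ i, (ℓ i : ℝ) * Om (S i) x) + σ * Om n x + τ * Om n' x)
      le_rfl le_rfl (by simp) (by simp)
      (.of_forall fun x => by
        rw [sum_siteCoeff_mul_freq (hSI ((le_max_left _ _).trans (le_max_left _ _))) hS0 ℓ hnI hnI'
          h0I, freq_of_ne_zero (n := n) (by omega), freq_of_ne_zero (n := n') (by omega)]
        simp only [Int.cast_zero, neg_zero, zero_mul, add_zero])
      (fun i => siteCoeff_site hS ℓ _ _ _ i (hSn i) (hSn' i) (hS0 i))
      (by
        rintro rfl
        obtain ⟨heq, hneq⟩ := hne rfl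
        by_cases hnn : n = n'
        · exact ⟨n, hnI, by simpa [siteCoeff_zero, ← hnn] using heq hnn⟩
        · rcases hneq hnn with h | h
          · exact ⟨n, hnI, by simpa [siteCoeff_zero, hnn] using h⟩
          · exact ⟨n', hnI', by simpa [siteCoeff_zero, Ne.symm hnn] using h⟩)
    refine ⟨k, by omega, le_trans ?_ hkρ⟩
    exact mul_le_mul_of_nonneg_right ((min_le_right _ _).trans (min_le_right _ _)) hb0
  have hnn : n' < M₁ → n ≠ n' := fun h => by omega
  rcases lt_or_ge n' M₁ with hnM' | hnM'
  · have hnI' : n' ∈ freqIndex N M₁ :=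
      mem_freqIndex.mpr (.inr (hn'.imp_right fun h => ⟨h, hnM'⟩))
    obtain ⟨k, hk, hkρ⟩ := h₂ γ hγ ℓ (siteCoeff S ℓ n' 1 0 τ (σ * n) (-σ)) σ 0 n n
      (fun x => (∑ i, (ℓ i : ℝ) * Om (S i) x) + σ * Om n x + τ * Om n' x)
      (by omega) (by omega) hσ (by simp)
      (by
        filter_upwards [hOm n] with x hx
        rw [sum_siteCoeff_mul_freq (hSI (le_max_left _ _)) hS0 ℓ hnI' h1I h0I, hx,
          freq_of_ne_zero (n := n') (by omega)]
        push_cast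
        ring)
      (fun i => siteCoeff_site hS ℓ _ _ _ i (hSn' i) (hS1 i) (hS0 i))
      (by
        rintro rfl
        have hor := (hne rfl).2 (hnn hnM')
        by_cases hσ0 : σ = 0
        · refine ⟨n', hnI', ?_⟩
          have : τ ≠ 0 := hor.resolve_left (by simp [hσ0])
          simpa [siteCoeff_zero, hσ0] using this
        · have : 0 ≠ n' := by omega
          exact ⟨0, h0I, by simpa [siteCoeff_zero, this] using hσ0⟩)
    refine ⟨k, by omega, le_trans ?_ hkρ⟩
    exact mul_le_mul_of_nonneg_right ((min_le_right _ _).trans (min_le_left _ _)) hb0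
  · obtain ⟨k, hk, hkρ⟩ := h₁ γ hγ ℓ
      (siteCoeff S ℓ 1 0 0 (σ * n + τ * n') (-(σ + τ)) 0) σ τ n n'
      (fun x => (∑ i, (ℓ i : ℝ) * Om (S i) x) + σ * Om n x + τ * Om n' x)
      (by omega) (by omega) hσ hτ
      (by
        filter_upwards [hOm n, hOm n'] with x hx hx'
        rw [sum_siteCoeff_mul_freq (hSI le_rfl) hS0 ℓ h1I h0I h0I, hx, hx']
        push_cast
        ring)
      (fun i => siteCoeff_site hS ℓ _ _ _ i (hS1 i) (hS0 i) (hS0 i))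
      (by
        rintro rfl
        obtain ⟨heq, hneq⟩ := hne rfl
        by_cases hst : σ + τ = 0
        · have hnn : n ≠ n' := fun h => heq h hst
          have hσ0 : σ ≠ 0 := by
            rcases hneq hnn with h | h <;> omega
          refine ⟨1, h1I, ?_⟩
          have hτ' : τ = -σ := by omega
          have : σ * ((n : ℤ) - n') ≠ 0 := mul_ne_zero hσ0 (by omega)
          simp only [siteCoeff_zero, if_true, one_ne_zero, if_false, add_zero, hτ']
          intro h
          exact this (by linear_combination h)
        · refine ⟨0, h0I, ?_⟩
          simp only [siteCoeff_zero, if_true, zero_ne_one, if_false, add_zero, zero_add]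
          omega)
    refine ⟨k, by omega, le_trans ?_ hkρ⟩
    exact mul_le_mul_of_nonneg_right (min_le_left _ _) hb0

/-- Transversality for combinations of the tangential frequencies with multiples of `Ω_1`. -/
theorem exists_mul_brk_le_first_mode {N : ℕ} (hN : 3 ≤ N) {γ₁ γ₂ : ℝ} (hγ₁ : 1 < γ₁)
    (hγ₁₂ : γ₁ ≤ γ₂) (hmu : 0 < muM N γ₂) {m : ℕ} {S : Fin m → ℕ} (hS : Function.Injective S)
    (hSlow : ∀ i, N ≤ S i) :
    ∃ (k₀ : ℕ) (ρ : ℝ), 0 < ρ ∧ ∀ γ ∈ Set.Icc γ₁ γ₂,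
      ∀ (ℓ : Fin m → ℤ) (j : ℤ), ¬(ℓ = 0 ∧ j = 0) →
        ∃ k ≤ k₀, ρ * brk ℓ ≤ |iteratedDeriv k
          (fun x => (∑ i, (ℓ i : ℝ) * Om (S i) x) + (j : ℝ) * Om 1 x) γ| := by
  have hSI : ∀ i, S i ∈ freqIndex N (univ.sup S + 1) := fun i =>
    mem_freqIndex.mpr (.inr (.inr
      ⟨hSlow i, Nat.lt_succ_of_le (Finset.le_sup (f := S) (mem_univ i))⟩))
  obtain ⟨k₀, ρ, T, hρ, h⟩ := exists_mul_brk_le_abs_iteratedDeriv hN hγ₁ hγ₁₂ hmu S _ hSI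
  have h0I : 0 ∈ freqIndex N (univ.sup S + 1) := mem_freqIndex.mpr (.inl rfl)
  have h1I : 1 ∈ freqIndex N (univ.sup S + 1) := mem_freqIndex.mpr (.inr (.inl rfl))
  have hS0 : ∀ i, S i ≠ 0 := fun i => by have := hSlow i; omega
  have hS1 : ∀ i, S i ≠ 1 := fun i => by have := hSlow i; omega
  refine ⟨k₀, ρ, hρ, fun γ hγ ℓ j hne => ?_⟩
  refine h γ hγ ℓ (siteCoeff S ℓ 1 0 0 j 0 0) 0 0 T T _ le_rfl le_rfl (by simp) (by simp)
    (.of_forall fun x => ?_)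
    (fun i => siteCoeff_site hS ℓ _ _ _ i (hS1 i) (hS0 i) (hS0 i)) ?_
  · rw [sum_siteCoeff_mul_freq hSI hS0 ℓ h1I h0I h0I, freq_of_ne_zero one_ne_zero]
    simp
  · rintro rfl
    exact ⟨1, h1I, by simpa [siteCoeff_zero] using hne⟩

end Transversality

/-- Transversality of the linear frequencies (Proposition 5.4). -/
theorem transversality
    (nbar : ℕ) (hnbar : 2 ≤ nbar)
    (γ₁ γ₂ : ℝ) (hγ₁ : 1 < γ₁) (hγ₁₂ : γ₁ ≤ γ₂)
    (hmu : ∀ γ ∈ Set.Icc γ₁ γ₂, 0 < muM (nbar + 1) γ)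
    (m : ℕ) (S : Fin m → ℕ) (hS : StrictMono S) (hSlow : ∀ i, nbar + 1 ≤ S i) :
    ∃ (k₀ : ℕ) (ρ₀ : ℝ), 0 < ρ₀ ∧
      ∀ γ ∈ Set.Icc γ₁ γ₂,
        -- (a)
        (∀ ℓ : Fin m → ℤ, ℓ ≠ 0 →
          ∃ k ≤ k₀, ρ₀ * brk ℓ ≤
            |iteratedDeriv k (fun x => ∑ i, (ℓ i : ℝ) * Om (S i) x) γ|) ∧
        -- (b)
        (∀ (ℓ : Fin m → ℤ) (j : ℤ), ¬(ℓ = 0 ∧ j = 0) →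
          ∃ k ≤ k₀, ρ₀ * brk ℓ ≤
            |iteratedDeriv k
              (fun x => (∑ i, (ℓ i : ℝ) * Om (S i) x) + (j : ℝ) * Om 1 x) γ|) ∧
        -- (c)
        (∀ (ℓ : Fin m → ℤ) (n : ℕ), (n = 1 ∨ nbar + 1 ≤ n) → (∀ i, S i ≠ n) →
          ∃ k ≤ k₀, ρ₀ * brk ℓ ≤
            |iteratedDeriv k
              (fun x => (∑ i, (ℓ i : ℝ) * Om (S i) x) + Om n x) γ|) ∧
        -- (d)
        (∀ (ℓ : Fin m → ℤ) (n n' : ℕ),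
          (n = 1 ∨ nbar + 1 ≤ n) → (∀ i, S i ≠ n) →
          (n' = 1 ∨ nbar + 1 ≤ n') → (∀ i, S i ≠ n') →
          ¬(ℓ = 0 ∧ n = n') →
          ∃ k ≤ k₀, ρ₀ * brk ℓ ≤
            |iteratedDeriv k
              (fun x => (∑ i, (ℓ i : ℝ) * Om (S i) x) + Om n x - Om n' x) γ|) ∧
        -- (e)
        (∀ (ℓ : Fin m → ℤ) (n n' : ℕ),
          (n = 1 ∨ nbar + 1 ≤ n) → (∀ i, S i ≠ n) →
          (n' = 1 ∨ nbar + 1 ≤ n') → (∀ i, S i ≠ n') →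
          ∃ k ≤ k₀, ρ₀ * brk ℓ ≤
            |iteratedDeriv k
              (fun x => (∑ i, (ℓ i : ℝ) * Om (S i) x) + Om n x + Om n' x) γ|) := by
  have hγ₂ : γ₂ ∈ Set.Icc γ₁ γ₂ := Set.right_mem_Icc.mpr hγ₁₂
  have hN : 3 ≤ nbar + 1 := by omega
  obtain ⟨k₁, ρ₁, hρ₁, h₁⟩ :=
    exists_mul_brk_le_first_mode hN hγ₁ hγ₁₂ (hmu γ₂ hγ₂) hS.injective hSlow
  obtain ⟨k₂, ρ₂, hρ₂, h₂⟩ :=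
    exists_mul_brk_le_two_modes hN hγ₁ hγ₁₂ (hmu γ₂ hγ₂) hS.injective hSlow
  have hb0 : ∀ ℓ : Fin m → ℤ, 0 ≤ brk ℓ := fun ℓ => zero_le_one.trans (le_max_left _ _)
  have hlift₁ : ∀ {ℓ : Fin m → ℤ} {D : ℕ → ℝ}, (∃ k ≤ k₁, ρ₁ * brk ℓ ≤ D k) →
      ∃ k ≤ max k₁ k₂, min ρ₁ ρ₂ * brk ℓ ≤ D k := fun {ℓ D} ⟨k, hk, h⟩ =>
    ⟨k, hk.trans (le_max_left _ _),
      (mul_le_mul_of_nonneg_right (min_le_left _ _) (hb0 ℓ)).trans h⟩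
  have hlift₂ : ∀ {ℓ : Fin m → ℤ} {D : ℕ → ℝ}, (∃ k ≤ k₂, ρ₂ * brk ℓ ≤ D k) →
      ∃ k ≤ max k₁ k₂, min ρ₁ ρ₂ * brk ℓ ≤ D k := fun {ℓ D} ⟨k, hk, h⟩ =>
    ⟨k, hk.trans (le_max_right _ _),
      (mul_le_mul_of_nonneg_right (min_le_right _ _) (hb0 ℓ)).trans h⟩
  refine ⟨max k₁ k₂, min ρ₁ ρ₂, lt_min hρ₁ hρ₂, fun γ hγ => ⟨?_, ?_, ?_, ?_, ?_⟩⟩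
  · intro ℓ hℓ
    simpa using hlift₁ (h₁ γ hγ ℓ 0 (by simp [hℓ]))
  · intro ℓ j hne
    exact hlift₁ (h₁ γ hγ ℓ j hne)
  · intro ℓ n hn hSn
    simpa using hlift₂ (h₂ γ hγ ℓ 1 0 n n (by simp) (by simp) hn hSn hn hSn (by simp))
  · intro ℓ n n' hn hSn hn' hSn' hne
    simpa [← sub_eq_add_neg] using hlift₂ (h₂ γ hγ ℓ 1 (-1) n n' (by simp) (by simp) hn hSn hn'
      hSn' fun h => ⟨fun e => absurd ⟨h, e⟩ hne, by simp⟩)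
  · intro ℓ n n' hn hSn hn' hSn'
    simpa using hlift₂ (h₂ γ hγ ℓ 1 1 n n' (by simp) (by simp) hn hSn hn' hSn' (by simp))
end

section
/- (Critical aspect ratios, Lemma 4.1.) (i) For every n ≥ 1 and every γ > 1, μ_n^-(γ) < μ_{n+1}^-(γ). (ii) For each n ≥ 1 the function γ ↦ μ_n^-(γ) is strictly decreasing on (1,∞), with limit n/4 − 1/2 as γ → 1⁺ and limit −1 as γ → +∞. (iii) For each n ≥ 3 there exists a unique γ̲_n ∈ (1,∞) such that μ_n^-(γ̲_n) = 0; moreover μ_n^-(γ) > 0 for 1 < γ < γ̲_n, μ_n^-(γ) < 0 for γ > γ̲_n, γ̲₃ = 3, and γ̲_n < γ̲_{n+1} for all n ≥ 3. (iv) For every n ≥ 1 and γ > 1, μ_n^+(γ) > μ_n^-(γ) and μ_{n+1}^+(γ) > μ_n^+(γ). (v) For each n ≥ 3 the function γ ↦ μ_n^+(γ) is positive and strictly decreasing on (1,∞), with limit n/4 − 1/2 as γ → 1⁺ and limit 0 as γ → +∞. -/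
open Real Filter

/-- The profile `n(1 − t²)/4 − 1/2 + c tⁿ/2`, which is `μ_n^±` in the variable
`t = (γ − 1)/(γ + 1)` for `c = ±1`. -/
noncomputable def muProfile (c : ℝ) (n : ℕ) (t : ℝ) : ℝ :=
  n * ((1 - t ^ 2) / 4) - 1 / 2 + c * t ^ n / 2

/-- The reparametrisation `t = (γ − 1)/(γ + 1)`. -/
noncomputable def aspectParam (γ : ℝ) : ℝ := (γ - 1) / (γ + 1)

theorem aspectParam_pos {γ : ℝ} (h : 1 < γ) : 0 < aspectParam γ :=
  div_pos (by linarith) (by linarith)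

theorem aspectParam_lt_one {γ : ℝ} (h : 1 < γ) : aspectParam γ < 1 :=
  (div_lt_one (by linarith)).2 (by linarith)

theorem strictMonoOn_aspectParam : StrictMonoOn aspectParam (Set.Ioi 1) := by
  intro a ha b hb hab
  simp only [Set.mem_Ioi] at ha hb
  unfold aspectParam
  rw [div_lt_div_iff₀ (by linarith) (by linarith)]
  nlinarith

theorem tendsto_aspectParam_one :
    Tendsto aspectParam (nhdsWithin (1 : ℝ) (Set.Ioi 1)) (nhds 0) := by
  have h : ContinuousAt aspectParam 1 := by
    unfold aspectParam
    exact ContinuousAt.div (by fun_prop) (by fun_prop) (by norm_num)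
  have h1 : aspectParam 1 = 0 := by simp [aspectParam]
  simpa only [h1] using h.tendsto.mono_left nhdsWithin_le_nhds

theorem tendsto_aspectParam_atTop : Tendsto aspectParam atTop (nhds 1) := by
  have h : Tendsto (fun γ : ℝ => 1 - 2 / (γ + 1)) atTop (nhds (1 - 0)) :=
    tendsto_const_nhds.sub
      (tendsto_const_nhds.div_atTop (tendsto_atTop_add_const_right _ _ tendsto_id))
  rw [sub_zero] at h
  refine h.congr' ?_
  filter_upwards [eventually_gt_atTop 1] with γ hγ
  have : γ + 1 ≠ 0 := by linarith
  unfold aspectParam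
  field_simp
  ring

theorem exists_aspectParam_eq {t : ℝ} (h0 : 0 < t) (h1 : t < 1) :
    ∃ γ, 1 < γ ∧ aspectParam γ = t := by
  have h : 0 < 1 - t := by linarith
  refine ⟨(1 + t) / (1 - t), (one_lt_div h).2 (by linarith), ?_⟩
  unfold aspectParam
  have h2 : (1 + t) / (1 - t) + 1 = 2 / (1 - t) := by field_simp; ring
  have h3 : (1 + t) / (1 - t) - 1 = 2 * t / (1 - t) := by field_simp; ring
  rw [h2, h3]
  field_simp

theorem OmG_eq {γ : ℝ} (h : γ + 1 ≠ 0) : OmG γ = (1 - aspectParam γ ^ 2) / 4 := by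
  have h' : 1 + γ ≠ 0 := by rwa [add_comm]
  unfold OmG aspectParam
  field_simp
  ring

theorem muP_eq (n : ℕ) {γ : ℝ} (h : 1 < γ) : muP n γ = muProfile 1 n (aspectParam γ) := by
  rw [muP, OmG_eq (by linarith), muProfile, one_mul]
  rfl

theorem muM_eq (n : ℕ) {γ : ℝ} (h : 1 < γ) : muM n γ = muProfile (-1) n (aspectParam γ) := by
  rw [muM, OmG_eq (by linarith), muProfile, neg_one_mul, neg_div, ← sub_eq_add_neg]
  rfl

theorem continuous_muProfile (c : ℝ) (n : ℕ) : Continuous (muProfile c n) := by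
  unfold muProfile
  fun_prop

theorem muProfile_zero (c : ℝ) {n : ℕ} (hn : n ≠ 0) : muProfile c n 0 = n / 4 - 1 / 2 := by
  simp [muProfile, hn, div_eq_mul_inv]

theorem muProfile_one (c : ℝ) (n : ℕ) : muProfile c n 1 = (c - 1) / 2 := by
  simp only [muProfile, one_pow]
  ring

theorem hasDerivAt_muProfile (c : ℝ) (n : ℕ) (t : ℝ) :
    HasDerivAt (muProfile c n) (n / 2 * (c * t ^ (n - 1) - t)) t := by
  have h := ((((hasDerivAt_pow 2 t).const_sub 1).div_const 4).const_mul (n : ℝ)).sub_const (1 / 2)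
    |>.add (((hasDerivAt_pow n t).const_mul c).div_const 2)
  refine h.congr_deriv ?_
  norm_num
  ring

theorem strictAntiOn_muProfile {c : ℝ} {n : ℕ} (hn : n ≠ 0)
    (h : ∀ t, 0 < t → t < 1 → c * t ^ (n - 1) < t) :
    StrictAntiOn (muProfile c n) (Set.Icc 0 1) := by
  refine strictAntiOn_of_deriv_neg (convex_Icc 0 1) (continuous_muProfile c n).continuousOn ?_
  intro t ht
  rw [interior_Icc] at ht
  rw [(hasDerivAt_muProfile c n t).deriv]
  have hn' : (0 : ℝ) < n := by positivity
  exact mul_neg_of_pos_of_neg (by positivity) (sub_neg.2 (h t ht.1 ht.2))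

theorem strictAntiOn_muProfile_neg_one {n : ℕ} (hn : 1 ≤ n) :
    StrictAntiOn (muProfile (-1) n) (Set.Icc 0 1) :=
  strictAntiOn_muProfile (by omega) fun t h0 _ => by
    have := pow_pos h0 (n - 1)
    linarith

theorem strictAntiOn_muProfile_one {n : ℕ} (hn : 3 ≤ n) :
    StrictAntiOn (muProfile 1 n) (Set.Icc 0 1) :=
  strictAntiOn_muProfile (by omega) fun t h0 h1 => by
    simpa using pow_lt_self_of_lt_one₀ h0 h1 (show 1 < n - 1 by omega)

theorem aspectParam_mem_Icc {γ : ℝ} (h : 1 < γ) : aspectParam γ ∈ Set.Icc (0 : ℝ) 1 :=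
  ⟨(aspectParam_pos h).le, (aspectParam_lt_one h).le⟩

theorem strictAntiOn_comp_aspectParam {f p : ℝ → ℝ} (hf : ∀ γ, 1 < γ → f γ = p (aspectParam γ))
    (hp : StrictAntiOn p (Set.Icc 0 1)) : StrictAntiOn f (Set.Ioi 1) := by
  intro a ha b hb hab
  rw [hf a ha, hf b hb]
  exact hp (aspectParam_mem_Icc ha) (aspectParam_mem_Icc hb) (strictMonoOn_aspectParam ha hb hab)

theorem tendsto_comp_aspectParam_one {f p : ℝ → ℝ}
    (hf : ∀ γ, 1 < γ → f γ = p (aspectParam γ)) (hp : Continuous p) :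
    Tendsto f (nhdsWithin (1 : ℝ) (Set.Ioi 1)) (nhds (p 0)) := by
  refine ((hp.tendsto 0).comp tendsto_aspectParam_one).congr' ?_
  filter_upwards [self_mem_nhdsWithin] with γ hγ using (hf γ hγ).symm

theorem tendsto_comp_aspectParam_atTop {f p : ℝ → ℝ}
    (hf : ∀ γ, 1 < γ → f γ = p (aspectParam γ)) (hp : Continuous p) :
    Tendsto f atTop (nhds (p 1)) := by
  refine ((hp.tendsto 1).comp tendsto_aspectParam_atTop).congr' ?_
  filter_upwards [eventually_gt_atTop 1] with γ hγ using (hf γ hγ).symm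

theorem strictAntiOn_muM {n : ℕ} (hn : 1 ≤ n) : StrictAntiOn (muM n) (Set.Ioi 1) :=
  strictAntiOn_comp_aspectParam (fun _ => muM_eq n) (strictAntiOn_muProfile_neg_one hn)

theorem muM_lt_muM_succ (n : ℕ) {γ : ℝ} (h : 1 < γ) : muM n γ < muM (n + 1) γ := by
  rw [muM_eq n h, muM_eq (n + 1) h]
  have h0 := aspectParam_pos h
  have h1 := aspectParam_lt_one h
  set t := aspectParam γ
  have key : muProfile (-1) (n + 1) t - muProfile (-1) n t
      = (1 - t) * ((1 + t) / 4 + t ^ n / 2) := by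
    simp only [muProfile]
    push_cast
    ring
  have : 0 < (1 - t) * ((1 + t) / 4 + t ^ n / 2) := mul_pos (by linarith) (by positivity)
  linarith

theorem muP_lt_muP_succ {n : ℕ} (hn : 1 ≤ n) {γ : ℝ} (h : 1 < γ) :
    muP n γ < muP (n + 1) γ := by
  rw [muP_eq n h, muP_eq (n + 1) h]
  have h0 := aspectParam_pos h
  have h1 := aspectParam_lt_one h
  set t := aspectParam γ
  have key : muProfile 1 (n + 1) t - muProfile 1 n t
      = (1 - t) * ((1 + t) / 4 - t ^ n / 2) := by
    simp only [muProfile]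
    push_cast
    ring
  have hpow : t ^ n ≤ t := pow_le_of_le_one h0.le h1.le (by omega)
  have : 0 < (1 - t) * ((1 + t) / 4 - t ^ n / 2) := mul_pos (by linarith) (by linarith)
  linarith

theorem muM_lt_muP (n : ℕ) {γ : ℝ} (h : 1 < γ) : muM n γ < muP n γ := by
  have : 0 < kap n γ := pow_pos (aspectParam_pos h) n
  unfold muM muP
  linarith

theorem muP_pos {n : ℕ} (hn : 3 ≤ n) {γ : ℝ} (h : 1 < γ) : 0 < muP n γ := by
  have := strictAntiOn_muProfile_one hn (aspectParam_mem_Icc h) (Set.right_mem_Icc.2 zero_le_one)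
    (aspectParam_lt_one h)
  rw [muProfile_one] at this
  rw [muP_eq n h]
  linarith

theorem exists_muM_eq_zero {n : ℕ} (hn : 3 ≤ n) : ∃ γ, 1 < γ ∧ muM n γ = 0 := by
  have hn' : (3 : ℝ) ≤ n := by exact_mod_cast hn
  have hmem : (0 : ℝ) ∈ Set.Ioo (muProfile (-1) n 1) (muProfile (-1) n 0) := by
    rw [muProfile_one, muProfile_zero _ (by omega)]
    constructor <;> linarith
  obtain ⟨t, ⟨h0, h1⟩, ht⟩ :=
    intermediate_value_Ioo' zero_le_one (continuous_muProfile (-1) n).continuousOn hmem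
  obtain ⟨γ, hγ, rfl⟩ := exists_aspectParam_eq h0 h1
  exact ⟨γ, hγ, (muM_eq n hγ).trans ht⟩

/-- Critical aspect ratios (Lemma 4.1). -/
theorem critical_aspect_ratios :
    -- (i)
    (∀ n : ℕ, 1 ≤ n → ∀ γ : ℝ, 1 < γ → muM n γ < muM (n + 1) γ) ∧
    -- (ii)
    (∀ n : ℕ, 1 ≤ n →
      StrictAntiOn (muM n) (Set.Ioi 1) ∧
      Tendsto (muM n) (nhdsWithin (1 : ℝ) (Set.Ioi 1)) (nhds ((n : ℝ) / 4 - 1 / 2)) ∧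
      Tendsto (muM n) atTop (nhds (-1))) ∧
    -- (iii)
    (∃ g : ℕ → ℝ,
      (∀ n : ℕ, 3 ≤ n →
        1 < g n ∧ muM n (g n) = 0 ∧
        (∀ γ : ℝ, 1 < γ → γ < g n → 0 < muM n γ) ∧
        (∀ γ : ℝ, g n < γ → muM n γ < 0) ∧
        (∀ γ : ℝ, 1 < γ → muM n γ = 0 → γ = g n)) ∧
      g 3 = 3 ∧
      (∀ n : ℕ, 3 ≤ n → g n < g (n + 1))) ∧
    -- (iv)
    (∀ n : ℕ, 1 ≤ n → ∀ γ : ℝ, 1 < γ →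
      muM n γ < muP n γ ∧ muP n γ < muP (n + 1) γ) ∧
    -- (v)
    (∀ n : ℕ, 3 ≤ n →
      (∀ γ : ℝ, 1 < γ → 0 < muP n γ) ∧
      StrictAntiOn (muP n) (Set.Ioi 1) ∧
      Tendsto (muP n) (nhdsWithin (1 : ℝ) (Set.Ioi 1)) (nhds ((n : ℝ) / 4 - 1 / 2)) ∧
      Tendsto (muP n) atTop (nhds 0)) := by
  refine ⟨fun n _ γ hγ => muM_lt_muM_succ n hγ, fun n hn => ⟨strictAntiOn_muM hn, ?_, ?_⟩, ?_,
    fun n hn γ hγ => ⟨muM_lt_muP n hγ, muP_lt_muP_succ hn hγ⟩,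
    fun n hn => ⟨fun γ hγ => muP_pos hn hγ,
      strictAntiOn_comp_aspectParam (fun _ => muP_eq n) (strictAntiOn_muProfile_one hn), ?_, ?_⟩⟩
  · rw [← muProfile_zero (-1) (show n ≠ 0 by omega)]
    exact tendsto_comp_aspectParam_one (fun _ => muM_eq n) (continuous_muProfile _ _)
  · rw [show (-1 : ℝ) = muProfile (-1) n 1 by rw [muProfile_one]; norm_num]
    exact tendsto_comp_aspectParam_atTop (fun _ => muM_eq n) (continuous_muProfile _ _)
  · choose! g hg hzero using fun (n : ℕ) (hn : 3 ≤ n) => exists_muM_eq_zero hn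
    have anti : ∀ n : ℕ, 3 ≤ n → StrictAntiOn (muM n) (Set.Ioi 1) :=
      fun n hn => strictAntiOn_muM (by omega)
    have uniq : ∀ n : ℕ, 3 ≤ n → ∀ γ : ℝ, 1 < γ → muM n γ = 0 → γ = g n :=
      fun n hn γ hγ h => (anti n hn).injOn hγ (hg n hn) (h.trans (hzero n hn).symm)
    refine ⟨g, fun n hn => ⟨hg n hn, hzero n hn, fun γ hγ hlt => ?_, fun γ hlt => ?_, uniq n hn⟩,
      ?_, fun n hn => ?_⟩
    · simpa only [hzero n hn] using anti n hn hγ (hg n hn) hlt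
    · simpa only [hzero n hn] using anti n hn (hg n hn) ((hg n hn).trans hlt) hlt
    · refine (uniq 3 le_rfl 3 (by norm_num) ?_).symm
      norm_num [muM, OmG, kap]
    · have hn' : 3 ≤ n + 1 := by omega
      rw [← (anti (n + 1) hn').lt_iff_gt (hg _ hn') (hg n hn), hzero _ hn', ← hzero n hn]
      exact muM_lt_muM_succ n (hg n hn)
  · rw [← muProfile_zero 1 (show n ≠ 0 by omega)]
    exact tendsto_comp_aspectParam_one (fun _ => muP_eq n) (continuous_muProfile _ _)
  · rw [show (0 : ℝ) = muProfile 1 n 1 by rw [muProfile_one]; norm_num]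
    exact tendsto_comp_aspectParam_atTop (fun _ => muP_eq n) (continuous_muProfile _ _)
end

section
/- (Differential of the pseudo-energy, Lemma 2.3.) The function s ↦ E(ξ+sq) is differentiable at s = 0 and its derivative equals ∫₀^{2π} q(θ) · [ (1/(4π)) ∫₀^{2π} ( ln(|w(θ)−w(θ')|²) − 1 ) · Im( (conj(w(θ')) − conj(w(θ))) · ∂_{θ'}w(θ') ) dθ' ] dθ, where w := w_0-lift of ξ, i.e. w(θ) = (1+2ξ(θ))^{1/2}·w₀(θ); here the inner integral is an absolutely convergent improper integral (the integrand has only a logarithmic singularity at θ' = θ). -/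
open Real MeasureTheory

/-- `g_γ(θ) := γ cos²θ + γ⁻¹ sin²θ`. -/
noncomputable def gell (γ θ : ℝ) : ℝ := γ * Real.cos θ ^ 2 + γ⁻¹ * Real.sin θ ^ 2

/-- `w₀(θ) := √γ cos θ + i γ^{−1/2} sin θ`. -/
noncomputable def w0 (γ θ : ℝ) : ℂ :=
  (Real.sqrt γ * Real.cos θ : ℝ) + Complex.I * ((Real.sin θ / Real.sqrt γ : ℝ) : ℂ)

/-- The `w₀`-lift of `ξ`: `w(θ) := (1+2ξ(θ))^{1/2} w₀(θ)`. -/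
noncomputable def wlift (γ : ℝ) (ξ : ℝ → ℝ) (θ : ℝ) : ℂ :=
  (Real.sqrt (1 + 2 * ξ θ) : ℂ) * w0 γ θ

/-- `M(ξ)(θ,θ')`. -/
noncomputable def Mker (γ : ℝ) (ξ : ℝ → ℝ) (θ θ' : ℝ) : ℝ :=
  γ * (Real.sqrt (1 + 2 * ξ θ) * Real.cos θ - Real.sqrt (1 + 2 * ξ θ') * Real.cos θ') ^ 2 +
    γ⁻¹ * (Real.sqrt (1 + 2 * ξ θ) * Real.sin θ - Real.sqrt (1 + 2 * ξ θ') * Real.sin θ') ^ 2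

/-- The mixed second partial derivative `∂²_{θθ'} M(ξ)(θ,θ')`. -/
noncomputable def D2Mker (γ : ℝ) (ξ : ℝ → ℝ) (θ θ' : ℝ) : ℝ :=
  deriv (fun a => deriv (fun b => Mker γ ξ a b) θ') θ

/-- The pseudo-energy
`E(ξ) := (1/(32π)) ∫₀^{2π}∫₀^{2π} (ln M(ξ) − 2) · M(ξ) · ∂²_{θθ'}M(ξ) dθ' dθ`. -/
noncomputable def Epseudo (γ : ℝ) (ξ : ℝ → ℝ) : ℝ :=
  (1 / (32 * π)) *
    ∫ θ in (0:ℝ)..(2 * π), ∫ θ' in (0:ℝ)..(2 * π),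
      (Real.log (Mker γ ξ θ θ') - 2) * Mker γ ξ θ θ' * D2Mker γ ξ θ θ'

theorem Mker_eq_normSq {γ : ℝ} (hγ : 0 < γ) (ξ : ℝ → ℝ) (θ θ' : ℝ) :
    Mker γ ξ θ θ' = Complex.normSq (wlift γ ξ θ - wlift γ ξ θ') := by
  have h1 : Real.sqrt γ ^ 2 = γ := Real.sq_sqrt hγ.le
  have h2 : (Real.sqrt γ)⁻¹ ^ 2 = γ⁻¹ := by rw [inv_pow, h1]
  simp only [Mker, wlift, w0, Complex.normSq_apply, Complex.sub_re, Complex.sub_im, Complex.mul_re,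
    Complex.mul_im, Complex.add_re, Complex.add_im, Complex.ofReal_re, Complex.ofReal_im,
    Complex.I_re, Complex.I_im, div_eq_mul_inv]
  rw [← h2]
  nth_rewrite 1 [← h1]
  ring

/-- The density `(ln |z|² − 2) |z|²` of the pseudo-energy. -/
noncomputable def logDensity (z : ℂ) : ℝ :=
  (Real.log (Complex.normSq z) - 2) * Complex.normSq z

/-- The conjugated gradient of `logDensity`, up to the factor `2`. -/
noncomputable def logGradient (z : ℂ) : ℂ :=
  ((Real.log (Complex.normSq z) - 1 : ℝ) : ℂ) * (starRingEnd ℂ) z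

theorem logDensity_neg (z : ℂ) : logDensity (-z) = logDensity z := by
  simp [logDensity]

theorem logGradient_neg (z : ℂ) : logGradient (-z) = -logGradient z := by
  simp [logGradient]

theorem continuous_logDensity : Continuous logDensity := by
  have h : logDensity = fun z : ℂ =>
      Complex.normSq z * Real.log (Complex.normSq z) - 2 * Complex.normSq z := by
    funext z
    simp only [logDensity]
    ring
  rw [h]
  exact Complex.continuous_normSq.mul_log.sub (continuous_const.mul Complex.continuous_normSq)

theorem continuous_logGradient : Continuous logGradient := by
  rw [continuous_iff_continuousAt]
  intro z
  by_cases hz : z = 0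
  · subst hz
    have hb : Filter.Tendsto (fun z : ℂ => |2 * (‖z‖ * Real.log ‖z‖) - ‖z‖|) (nhds 0) (nhds 0) := by
      have hc : Continuous (fun z : ℂ => |2 * (‖z‖ * Real.log ‖z‖) - ‖z‖|) :=
        ((continuous_const.mul continuous_norm.mul_log).sub continuous_norm).abs
      simpa using hc.tendsto 0
    have h0 : logGradient 0 = 0 := by simp [logGradient]
    rw [ContinuousAt, h0]
    refine squeeze_zero_norm (fun z => le_of_eq ?_) hb
    rw [logGradient, norm_mul, Complex.norm_real, RCLike.norm_conj, Complex.normSq_eq_norm_sq,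
      Real.log_pow, Real.norm_eq_abs, ← abs_norm z, ← abs_mul, abs_norm]
    congr 1
    push_cast
    ring
  · have hz' : Complex.normSq z ≠ 0 := by simpa using hz
    unfold logGradient
    have := Complex.continuous_normSq.continuousAt (x := z)
    have := (Complex.continuous_ofReal.continuousAt.comp
      ((this.log hz').sub (continuousAt_const (y := (1 : ℝ)))))
    exact this.mul Complex.continuous_conj.continuousAt

@[fun_prop]
theorem Continuous.logDensity {X : Type*} [TopologicalSpace X] {f : X → ℂ} (hf : Continuous f) :
    Continuous fun x => logDensity (f x) :=
  continuous_logDensity.comp hf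

@[fun_prop]
theorem Continuous.logGradient {X : Type*} [TopologicalSpace X] {f : X → ℂ} (hf : Continuous f) :
    Continuous fun x => logGradient (f x) :=
  continuous_logGradient.comp hf

attribute [irreducible] logGradient

theorem HasDerivAt.normSq {z : ℝ → ℂ} {z' : ℂ} {t : ℝ} (hz : HasDerivAt z z' t) :
    HasDerivAt (fun t => Complex.normSq (z t)) (2 * ((starRingEnd ℂ) (z t) * z').re) t := by
  have h := hz.norm_sq
  simp only [Complex.normSq_eq_norm_sq]
  convert h using 2
  simp [mul_comm]

theorem hasFDerivAt_logDensity_zero : HasFDerivAt logDensity (0 : ℂ →L[ℝ] ℝ) 0 := by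
  rw [hasFDerivAt_iff_isLittleO_nhds_zero]
  have h0 : logDensity 0 = 0 := by simp [logDensity]
  have hb : Filter.Tendsto (fun z : ℂ => 2 * (‖z‖ * Real.log ‖z‖) - 2 * ‖z‖) (nhds 0) (nhds 0) := by
    have hc : Continuous (fun z : ℂ => 2 * (‖z‖ * Real.log ‖z‖) - 2 * ‖z‖) :=
      (continuous_const.mul continuous_norm.mul_log).sub (continuous_const.mul continuous_norm)
    simpa using hc.tendsto 0
  have h1 := (Asymptotics.isLittleO_one_iff ℝ).2 hb
  have h2 := (h1.mul_isBigO (Asymptotics.isBigO_refl (fun z : ℂ => ‖z‖) (nhds 0))).congr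
    (f₂ := fun h => logDensity (0 + h) - logDensity 0 - (0 : ℂ →L[ℝ] ℝ) h) (g₂ := fun z => ‖z‖)
    (fun z => by
      simp only [zero_add, logDensity, Complex.normSq_eq_norm_sq, Real.log_pow]
      simp
      ring)
    (fun z => one_mul _)
  exact h2.of_norm_right

theorem HasDerivAt.logDensity {z : ℝ → ℂ} {z' : ℂ} {t : ℝ} (hz : HasDerivAt z z' t) :
    HasDerivAt (fun t => logDensity (z t)) (2 * (logGradient (z t) * z').re) t := by
  by_cases h0 : z t = 0
  · have h := hasFDerivAt_logDensity_zero
    rw [← h0] at h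
    exact (h.comp_hasDerivAt t hz).congr_deriv (by simp [h0, logGradient])
  · have hn : Complex.normSq (z t) ≠ 0 := by simpa using h0
    have h := ((hz.normSq.log hn).sub_const 2).mul hz.normSq
    unfold _root_.logDensity logGradient
    refine h.congr_deriv ?_
    rw [mul_assoc, Complex.re_ofReal_mul, div_mul_cancel₀ _ hn]
    ring

/-- Differentiation under the integral sign for a uniformly bounded derivative. -/
theorem hasDerivAt_intervalIntegral_of_bounded {f f' : ℝ → ℝ → ℝ} {a b C : ℝ} {U : Set ℝ}
    (hU : IsOpen U) (hf : ∀ s ∈ U, Continuous (f s)) (hf' : ∀ s ∈ U, Continuous (f' s))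
    (hbd : ∀ s ∈ U, ∀ t ∈ Set.uIcc a b, |f' s t| ≤ C)
    (hd : ∀ s ∈ U, ∀ t ∈ Set.uIcc a b, HasDerivAt (fun s => f s t) (f' s t) s) {s : ℝ} (hs : s ∈ U) :
    HasDerivAt (fun s => ∫ t in a..b, f s t) (∫ t in a..b, f' s t) s := by
  refine (intervalIntegral.hasDerivAt_integral_of_dominated_loc_of_deriv_le
    (bound := fun _ => C) (hU.mem_nhds hs) ?_ ?_ ?_ ?_ ?_ ?_).2
  · filter_upwards [hU.mem_nhds hs] with r hr
    exact (hf r hr).aestronglyMeasurable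
  · exact (hf s hs).intervalIntegrable _ _
  · exact (hf' s hs).aestronglyMeasurable
  · exact .of_forall fun t ht r hr => hbd r hr t (Set.uIoc_subset_uIcc ht)
  · exact intervalIntegrable_const
  · exact .of_forall fun t ht r hr => hd r hr t (Set.uIoc_subset_uIcc ht)

theorem intervalIntegral_swap_of_continuous {f : ℝ → ℝ → ℝ} (hf : Continuous (Function.uncurry f))
    (a b c d : ℝ) :
    ∫ x in a..b, ∫ y in c..d, f x y = ∫ y in c..d, ∫ x in a..b, f x y := by
  refine intervalIntegral_intervalIntegral_swap ?_
  have hc : IsCompact (Set.uIcc a b ×ˢ Set.uIcc c d) := isCompact_uIcc.prod isCompact_uIcc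
  exact (hf.continuousOn.integrableOn_compact hc).mono_set
    (Set.prod_mono Set.uIoc_subset_uIcc Set.uIoc_subset_uIcc)

/-- The integrand of the first variation of `∬ logDensity (w θ - w θ') ⟪p θ, p θ'⟫` when `w` and
`p` vary with velocities `v` and `u`. -/
noncomputable def firstVariation (w p v u : ℝ → ℂ) (θ θ' : ℝ) : ℝ :=
  2 * (logGradient (w θ - w θ') * (v θ - v θ')).re * ((starRingEnd ℂ) (p θ) * p θ').re +
    logDensity (w θ - w θ') *
      (((starRingEnd ℂ) (u θ) * p θ').re + ((starRingEnd ℂ) (p θ) * u θ').re)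

theorem integral_firstVariation {w p v u : ℝ → ℂ} {T : ℝ}
    (hp : Continuous p) (hu : Continuous u)
    (hw : ∀ θ, HasDerivAt w (p θ) θ) (hv : ∀ θ, HasDerivAt v (u θ) θ)
    (hwT : w T = w 0) (hvT : v T = v 0) :
    ∫ θ in (0:ℝ)..T, ∫ θ' in (0:ℝ)..T, firstVariation w p v u θ θ' =
      4 * ∫ θ in (0:ℝ)..T, ((starRingEnd ℂ) (v θ) * p θ).im *
        ∫ θ' in (0:ℝ)..T, (logGradient (w θ - w θ') * p θ').im := by
  have hwc : Continuous w := continuous_iff_continuousAt.2 fun θ => (hw θ).continuousAt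
  have hvc : Continuous v := continuous_iff_continuousAt.2 fun θ => (hv θ).continuousAt
  set X : ℝ → ℝ → ℝ := fun θ θ' => ((starRingEnd ℂ) (v θ) * p θ).im *
    (logGradient (w θ - w θ') * p θ').im with hX
  set D : ℝ → ℝ → ℝ := fun θ θ' =>
    2 * (logGradient (w θ - w θ') * p θ).re * ((starRingEnd ℂ) (v θ) * p θ').re +
      logDensity (w θ - w θ') * ((starRingEnd ℂ) (u θ) * p θ').re with hD
  have hXc : Continuous (Function.uncurry X) := by
    simp only [hX, Function.uncurry_def]
    fun_prop
  have hDc : Continuous (Function.uncurry D) := by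
    simp only [hD, Function.uncurry_def]
    fun_prop
  have hD0 : ∫ θ in (0:ℝ)..T, ∫ θ' in (0:ℝ)..T, D θ θ' = 0 := by
    rw [intervalIntegral_swap_of_continuous hDc]
    refine intervalIntegral.integral_zero_ae (.of_forall fun θ' _ => ?_)
    have hder : ∀ θ ∈ Set.uIcc 0 T, HasDerivAt
        (fun θ => logDensity (w θ - w θ') * ((starRingEnd ℂ) (v θ) * p θ').re) (D θ θ') θ := by
      intro θ _
      have h1 := ((hw θ).sub_const (w θ')).logDensity
      have h2 : HasDerivAt (fun θ => ((starRingEnd ℂ) (v θ) * p θ').re)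
          ((starRingEnd ℂ) (u θ) * p θ').re θ := by
        have h3 := ((hv θ).star.mul_const (p θ'))
        exact Complex.reCLM.hasFDerivAt.comp_hasDerivAt θ h3
      exact h1.mul h2
    rw [intervalIntegral.integral_eq_sub_of_hasDerivAt hder, hwT, hvT, sub_self]
    exact Continuous.intervalIntegrable (hDc.comp (Continuous.prodMk_left θ')) _ _
  have hpt : ∀ θ θ', firstVariation w p v u θ θ' =
      (2 * X θ θ' + D θ θ') + (2 * X θ' θ + D θ' θ) := by
    intro θ θ'
    have hs : w θ' - w θ = -(w θ - w θ') := by ring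
    simp only [hX, hD, firstVariation]
    rw [hs, logGradient_neg, logDensity_neg]
    generalize logGradient (w θ - w θ') = G
    simp only [Complex.mul_re, Complex.mul_im, Complex.conj_re, Complex.conj_im, Complex.sub_re,
      Complex.sub_im, Complex.neg_re, Complex.neg_im]
    ring
  set H : ℝ → ℝ → ℝ := fun θ θ' => 2 * X θ θ' + D θ θ' with hH
  have hHc : Continuous (Function.uncurry H) := (continuous_const.mul hXc).add hDc
  have hHc' : Continuous (Function.uncurry fun θ θ' => H θ' θ) := hHc.comp continuous_swap
  have inner : ∀ {f : ℝ → ℝ → ℝ}, Continuous (Function.uncurry f) → ∀ θ,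
      IntervalIntegrable (f θ) volume 0 T := fun hf θ =>
    Continuous.intervalIntegrable (hf.comp (Continuous.prodMk_right θ)) _ _
  have outer : ∀ {f : ℝ → ℝ → ℝ}, Continuous (Function.uncurry f) →
      IntervalIntegrable (fun θ => ∫ θ' in (0:ℝ)..T, f θ θ') volume 0 T := fun hf =>
    (intervalIntegral.continuous_parametric_intervalIntegral_of_continuous' hf _ _
      ).intervalIntegrable _ _
  have hHX : ∫ θ in (0:ℝ)..T, ∫ θ' in (0:ℝ)..T, H θ θ' =
      2 * ∫ θ in (0:ℝ)..T, ∫ θ' in (0:ℝ)..T, X θ θ' := by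
    have : ∀ θ, ∫ θ' in (0:ℝ)..T, H θ θ' =
        2 * (∫ θ' in (0:ℝ)..T, X θ θ') + ∫ θ' in (0:ℝ)..T, D θ θ' := fun θ => by
      rw [← intervalIntegral.integral_const_mul]
      exact intervalIntegral.integral_add ((inner hXc θ).const_mul 2) (inner hDc θ)
    simp only [this]
    rw [intervalIntegral.integral_add ((outer hXc).const_mul 2) (outer hDc), hD0,
      intervalIntegral.integral_const_mul, add_zero]
  calc ∫ θ in (0:ℝ)..T, ∫ θ' in (0:ℝ)..T, firstVariation w p v u θ θ'
      = ∫ θ in (0:ℝ)..T, ((∫ θ' in (0:ℝ)..T, H θ θ') + ∫ θ' in (0:ℝ)..T, H θ' θ) := by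
        refine intervalIntegral.integral_congr fun θ _ => ?_
        simp only [hpt]
        exact intervalIntegral.integral_add (inner hHc θ) (inner hHc' θ)
    _ = 2 * ∫ θ in (0:ℝ)..T, ∫ θ' in (0:ℝ)..T, H θ θ' := by
        rw [intervalIntegral.integral_add (outer hHc) (outer hHc'),
          ← intervalIntegral_swap_of_continuous hHc, two_mul]
    _ = _ := by
        rw [hHX]
        simp only [hX, intervalIntegral.integral_const_mul]
        ring

/-- First variation of a double integral with density `logDensity` along a family of closed
curves `w s` with tangents `p s`. -/
theorem hasDerivAt_integral_logDensity {w p v u : ℝ → ℝ → ℂ} {T : ℝ}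
    (hwc : ContinuousOn (Function.uncurry w) (Set.Icc (-1) 1 ×ˢ Set.univ))
    (hpc : ContinuousOn (Function.uncurry p) (Set.Icc (-1) 1 ×ˢ Set.univ))
    (hvc : ContinuousOn (Function.uncurry v) (Set.Icc (-1) 1 ×ˢ Set.univ))
    (huc : ContinuousOn (Function.uncurry u) (Set.Icc (-1) 1 ×ˢ Set.univ))
    (hws : ∀ s ∈ Set.Ioo (-1:ℝ) 1, ∀ θ, HasDerivAt (fun s => w s θ) (v s θ) s)
    (hps : ∀ s ∈ Set.Ioo (-1:ℝ) 1, ∀ θ, HasDerivAt (fun s => p s θ) (u s θ) s) :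
    HasDerivAt (fun s => ∫ θ in (0:ℝ)..T, ∫ θ' in (0:ℝ)..T,
        logDensity (w s θ - w s θ') * ((starRingEnd ℂ) (p s θ) * p s θ').re)
      (∫ θ in (0:ℝ)..T, ∫ θ' in (0:ℝ)..T, firstVariation (w 0) (p 0) (v 0) (u 0) θ θ') 0 := by
  have hre := Complex.continuous_re
  have hconj := Complex.continuous_conj
  have slice : ∀ {f : ℝ → ℝ → ℂ},
      ContinuousOn (Function.uncurry f) (Set.Icc (-1) 1 ×ˢ Set.univ) →
      ∀ s ∈ Set.Ioo (-1:ℝ) 1, Continuous (f s) := fun hf s hs =>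
    hf.comp_continuous (Continuous.prodMk_right s) fun θ => ⟨Set.Ioo_subset_Icc_self hs, trivial⟩
  have hKc : ∀ s ∈ Set.Ioo (-1:ℝ) 1, Continuous (Function.uncurry fun θ θ' =>
      logDensity (w s θ - w s θ') * ((starRingEnd ℂ) (p s θ) * p s θ').re) := by
    intro s hs
    have := slice hwc s hs
    have := slice hpc s hs
    simp only [Function.uncurry_def]
    fun_prop
  have hVc : ∀ s ∈ Set.Ioo (-1:ℝ) 1,
      Continuous (Function.uncurry (firstVariation (w s) (p s) (v s) (u s))) := by
    intro s hs
    have := slice hwc s hs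
    have := slice hpc s hs
    have := slice hvc s hs
    have := slice huc s hs
    simp only [Function.uncurry_def, firstVariation]
    fun_prop
  have hKd : ∀ s ∈ Set.Ioo (-1:ℝ) 1, ∀ θ θ', HasDerivAt
      (fun s => logDensity (w s θ - w s θ') * ((starRingEnd ℂ) (p s θ) * p s θ').re)
      (firstVariation (w s) (p s) (v s) (u s) θ θ') s := by
    intro s hs θ θ'
    have h1 := ((hws s hs θ).sub (hws s hs θ')).logDensity
    have h2 := (hps s hs θ).star.mul (hps s hs θ')
    have h3 := Complex.reCLM.hasFDerivAt.comp_hasDerivAt s h2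
    exact h1.mul h3
  obtain ⟨C, hC⟩ : ∃ C, ∀ x ∈ Set.Icc (-1:ℝ) 1 ×ˢ (Set.uIcc 0 T ×ˢ Set.uIcc 0 T),
      ‖firstVariation (w x.1) (p x.1) (v x.1) (u x.1) x.2.1 x.2.2‖ ≤ C := by
    refine (isCompact_Icc.prod (isCompact_uIcc.prod isCompact_uIcc)).exists_bound_of_continuousOn ?_
    have left : ∀ {f : ℝ → ℝ → ℂ},
        ContinuousOn (Function.uncurry f) (Set.Icc (-1) 1 ×ˢ Set.univ) →
        ContinuousOn (fun x : ℝ × ℝ × ℝ => f x.1 x.2.1)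
          (Set.Icc (-1:ℝ) 1 ×ˢ (Set.uIcc 0 T ×ˢ Set.uIcc 0 T)) := fun hf =>
      hf.comp (g := Function.uncurry _) (f := fun x : ℝ × ℝ × ℝ => (x.1, x.2.1))
        (by fun_prop) fun x hx => ⟨hx.1, trivial⟩
    have right : ∀ {f : ℝ → ℝ → ℂ},
        ContinuousOn (Function.uncurry f) (Set.Icc (-1) 1 ×ˢ Set.univ) →
        ContinuousOn (fun x : ℝ × ℝ × ℝ => f x.1 x.2.2)
          (Set.Icc (-1:ℝ) 1 ×ˢ (Set.uIcc 0 T ×ˢ Set.uIcc 0 T)) := fun hf =>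
      hf.comp (g := Function.uncurry _) (f := fun x : ℝ × ℝ × ℝ => (x.1, x.2.2))
        (by fun_prop) fun x hx => ⟨hx.1, trivial⟩
    have hw1 := left hwc
    have hw2 := right hwc
    have hp1 := left hpc
    have hp2 := right hpc
    have hv1 := left hvc
    have hv2 := right hvc
    have hu1 := left huc
    have hu2 := right huc
    have hG1 := continuous_logGradient.comp_continuousOn (hw1.sub hw2)
    have hΦ1 := continuous_logDensity.comp_continuousOn (hw1.sub hw2)
    have hA := hre.comp_continuousOn (hG1.mul (hv1.sub hv2))
    have hB := hre.comp_continuousOn ((hconj.comp_continuousOn hp1).mul hp2)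
    have hC := hre.comp_continuousOn ((hconj.comp_continuousOn hu1).mul hp2)
    have hD := hre.comp_continuousOn ((hconj.comp_continuousOn hp1).mul hu2)
    exact ((continuousOn_const.mul hA).mul hB).add (hΦ1.mul (hC.add hD))
  have h0 : (0:ℝ) ∈ Set.Ioo (-1:ℝ) 1 := by norm_num
  refine hasDerivAt_intervalIntegral_of_bounded (C := C * |T - 0|) isOpen_Ioo
    (f' := fun s θ => ∫ θ' in (0:ℝ)..T, firstVariation (w s) (p s) (v s) (u s) θ θ')
    (fun s hs => ?_) (fun s hs => ?_) (fun s hs θ hθ => ?_) (fun s hs θ hθ => ?_) h0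
  · exact intervalIntegral.continuous_parametric_intervalIntegral_of_continuous' (hKc s hs) _ _
  · exact intervalIntegral.continuous_parametric_intervalIntegral_of_continuous' (hVc s hs) _ _
  · exact intervalIntegral.norm_integral_le_of_norm_le_const fun θ' hθ' =>
      hC (s, θ, θ') ⟨Set.Ioo_subset_Icc_self hs, hθ, Set.uIoc_subset_uIcc hθ'⟩
  · exact hasDerivAt_intervalIntegral_of_bounded (C := C) isOpen_Ioo
      (fun r hr => (hKc r hr).comp (Continuous.prodMk_right θ))
      (fun r hr => (hVc r hr).comp (Continuous.prodMk_right θ))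
      (fun r hr θ' hθ' => hC (r, θ, θ') ⟨Set.Ioo_subset_Icc_self hr, hθ, hθ'⟩)
      (fun r hr θ' _ => hKd r hr θ θ') hs

theorem D2Mker_eq {γ : ℝ} (hγ : 0 < γ) {ξ : ℝ → ℝ} {p : ℝ → ℂ}
    (hp : ∀ θ, HasDerivAt (wlift γ ξ) (p θ) θ) (θ θ' : ℝ) :
    D2Mker γ ξ θ θ' = -2 * ((starRingEnd ℂ) (p θ) * p θ').re := by
  have h1 : ∀ a, deriv (fun b => Mker γ ξ a b) θ' =
      2 * ((starRingEnd ℂ) (wlift γ ξ a - wlift γ ξ θ') * -p θ').re := fun a => by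
    simp only [Mker_eq_normSq hγ]
    exact ((hp θ').const_sub (wlift γ ξ a)).normSq.deriv
  simp only [D2Mker, h1]
  have h2 := ((hp θ).sub_const (wlift γ ξ θ')).star.mul_const (-p θ')
  have h3 := (Complex.reCLM.hasFDerivAt.comp_hasDerivAt θ h2).const_mul 2
  refine h3.deriv.trans ?_
  rw [mul_neg, map_neg, mul_neg, neg_mul]
  rfl

theorem Epseudo_eq {γ : ℝ} (hγ : 0 < γ) {ξ : ℝ → ℝ} {p : ℝ → ℂ}
    (hp : ∀ θ, HasDerivAt (wlift γ ξ) (p θ) θ) :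
    Epseudo γ ξ = -(1 / (16 * π)) * ∫ θ in (0:ℝ)..(2 * π), ∫ θ' in (0:ℝ)..(2 * π),
      logDensity (wlift γ ξ θ - wlift γ ξ θ') * ((starRingEnd ℂ) (p θ) * p θ').re := by
  have h : ∀ θ θ', (Real.log (Mker γ ξ θ θ') - 2) * Mker γ ξ θ θ' * D2Mker γ ξ θ θ' =
      -2 * (logDensity (wlift γ ξ θ - wlift γ ξ θ') * ((starRingEnd ℂ) (p θ) * p θ').re) := by
    intro θ θ'
    rw [Mker_eq_normSq hγ, D2Mker_eq hγ hp, logDensity]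
    ring
  simp only [Epseudo, h, intervalIntegral.integral_const_mul]
  field_simp
  ring

/-- The derivative of `w0 γ`. -/
noncomputable def w0' (γ θ : ℝ) : ℂ :=
  (-(Real.sqrt γ * Real.sin θ) : ℝ) + Complex.I * ((Real.cos θ / Real.sqrt γ : ℝ) : ℂ)

theorem hasDerivAt_w0 (γ θ : ℝ) : HasDerivAt (w0 γ) (w0' γ θ) θ := by
  have h1 := ((Real.hasDerivAt_cos θ).const_mul (Real.sqrt γ)).ofReal_comp
  have h2 := (((Real.hasDerivAt_sin θ).div_const (Real.sqrt γ)).ofReal_comp).const_mul Complex.I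
  refine (h1.add h2).congr_deriv ?_
  simp [w0']

@[fun_prop]
theorem continuous_w0 (γ : ℝ) : Continuous (w0 γ) :=
  continuous_iff_continuousAt.2 fun θ => (hasDerivAt_w0 γ θ).continuousAt

@[fun_prop]
theorem continuous_w0' (γ : ℝ) : Continuous (w0' γ) := by
  unfold w0'
  fun_prop

theorem w0_add_two_pi (γ θ : ℝ) : w0 γ (θ + 2 * π) = w0 γ θ := by
  simp [w0]

theorem w0_cross_w0' {γ : ℝ} (hγ : 0 < γ) (θ : ℝ) :
    ((starRingEnd ℂ) (w0 γ θ) * w0' γ θ).im = 1 := by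
  have h : Real.sqrt γ ≠ 0 := (Real.sqrt_pos.2 hγ).ne'
  simp only [w0, w0', Complex.mul_im, Complex.conj_re, Complex.conj_im, Complex.add_re,
    Complex.add_im, Complex.mul_re, Complex.ofReal_re, Complex.ofReal_im, Complex.I_re,
    Complex.I_im]
  field_simp
  linear_combination (Real.sqrt γ ^ 2) * Real.sin_sq_add_cos_sq θ

/-- The tangent of the curve `wlift γ ξ`, where `ξ'` is the derivative of `ξ`. -/
noncomputable def wtangent (γ : ℝ) (ξ ξ' : ℝ → ℝ) (θ : ℝ) : ℂ :=
  ((ξ' θ / Real.sqrt (1 + 2 * ξ θ) : ℝ) : ℂ) * w0 γ θ +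
    ((Real.sqrt (1 + 2 * ξ θ) : ℝ) : ℂ) * w0' γ θ

/-- The velocity of the curve `wlift γ ξ` when `ξ` moves with velocity `q`. -/
noncomputable def wvelocity (γ : ℝ) (ξ q : ℝ → ℝ) (θ : ℝ) : ℂ :=
  ((q θ / Real.sqrt (1 + 2 * ξ θ) : ℝ) : ℂ) * w0 γ θ

/-- The velocity of the tangent `wtangent γ ξ ξ'` when `ξ` moves with velocity `q`. -/
noncomputable def wtangentVelocity (γ : ℝ) (ξ ξ' q q' : ℝ → ℝ) (θ : ℝ) : ℂ :=
  ((q' θ / Real.sqrt (1 + 2 * ξ θ) - q θ * ξ' θ / Real.sqrt (1 + 2 * ξ θ) ^ 3 : ℝ) : ℂ) * w0 γ θ +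
    ((q θ / Real.sqrt (1 + 2 * ξ θ) : ℝ) : ℂ) * w0' γ θ

theorem hasDerivAt_sqrt_one_add_two_mul {f : ℝ → ℝ} {f' t : ℝ} (hf : HasDerivAt f f' t)
    (h : 0 < 1 + 2 * f t) :
    HasDerivAt (fun t => Real.sqrt (1 + 2 * f t)) (f' / Real.sqrt (1 + 2 * f t)) t := by
  refine (((hf.const_mul 2).const_add 1).sqrt h.ne').congr_deriv ?_
  rw [mul_div_mul_left _ _ two_ne_zero]

theorem hasDerivAt_div_sqrt_one_add_two_mul {f g : ℝ → ℝ} {f' g' t : ℝ} (hf : HasDerivAt f f' t)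
    (hg : HasDerivAt g g' t) (h : 0 < 1 + 2 * f t) :
    HasDerivAt (fun t => g t / Real.sqrt (1 + 2 * f t))
      (g' / Real.sqrt (1 + 2 * f t) - g t * f' / Real.sqrt (1 + 2 * f t) ^ 3) t := by
  have h0 : Real.sqrt (1 + 2 * f t) ≠ 0 := (Real.sqrt_pos.2 h).ne'
  refine (hg.div (hasDerivAt_sqrt_one_add_two_mul hf h) h0).congr_deriv ?_
  field_simp

theorem hasDerivAt_wlift (γ : ℝ) {ξ ξ' : ℝ → ℝ} {θ : ℝ} (hξ : HasDerivAt ξ (ξ' θ) θ)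
    (h : 0 < 1 + 2 * ξ θ) : HasDerivAt (wlift γ ξ) (wtangent γ ξ ξ' θ) θ :=
  (hasDerivAt_sqrt_one_add_two_mul hξ h).ofReal_comp.mul (hasDerivAt_w0 γ θ)

theorem hasDerivAt_wvelocity (γ : ℝ) {ξ ξ' q q' : ℝ → ℝ} {θ : ℝ} (hξ : HasDerivAt ξ (ξ' θ) θ)
    (hq : HasDerivAt q (q' θ) θ) (h : 0 < 1 + 2 * ξ θ) :
    HasDerivAt (wvelocity γ ξ q) (wtangentVelocity γ ξ ξ' q q' θ) θ :=
  (hasDerivAt_div_sqrt_one_add_two_mul hξ hq h).ofReal_comp.mul (hasDerivAt_w0 γ θ)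

theorem hasDerivAt_wlift_param (γ : ℝ) (ξ q : ℝ → ℝ) {s θ : ℝ}
    (h : 0 < 1 + 2 * (ξ θ + s * q θ)) :
    HasDerivAt (fun s => wlift γ (fun t => ξ t + s * q t) θ)
      (wvelocity γ (fun t => ξ t + s * q t) q θ) s :=
  (hasDerivAt_sqrt_one_add_two_mul ((hasDerivAt_mul_const (q θ)).const_add (ξ θ))
    h).ofReal_comp.mul_const (w0 γ θ)

theorem hasDerivAt_wtangent_param (γ : ℝ) (ξ ξ' q q' : ℝ → ℝ) {s θ : ℝ}
    (h : 0 < 1 + 2 * (ξ θ + s * q θ)) :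
    HasDerivAt (fun s => wtangent γ (fun t => ξ t + s * q t) (fun t => ξ' t + s * q' t) θ)
      (wtangentVelocity γ (fun t => ξ t + s * q t) (fun t => ξ' t + s * q' t) q q' θ) s := by
  have hs : HasDerivAt (fun s => ξ θ + s * q θ) (q θ) s :=
    (hasDerivAt_mul_const (q θ)).const_add (ξ θ)
  have hs' : HasDerivAt (fun s => ξ' θ + s * q' θ) (q' θ) s :=
    (hasDerivAt_mul_const (q' θ)).const_add (ξ' θ)
  refine (((hasDerivAt_div_sqrt_one_add_two_mul hs hs' h).ofReal_comp.mul_const (w0 γ θ)).add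
    ((hasDerivAt_sqrt_one_add_two_mul hs h).ofReal_comp.mul_const (w0' γ θ))).congr_deriv ?_
  simp only [wtangentVelocity, mul_comm]

theorem wvelocity_cross_wtangent {γ : ℝ} (hγ : 0 < γ) (ξ ξ' q : ℝ → ℝ) {θ : ℝ}
    (h : 0 < 1 + 2 * ξ θ) :
    ((starRingEnd ℂ) (wvelocity γ ξ q θ) * wtangent γ ξ ξ' θ).im = q θ := by
  have h0 : Real.sqrt (1 + 2 * ξ θ) ≠ 0 := (Real.sqrt_pos.2 h).ne'
  have h1 := w0_cross_w0' hγ θ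
  simp only [wvelocity, wtangent]
  generalize w0 γ θ = z at *
  generalize w0' γ θ = z' at *
  simp only [Complex.mul_im, Complex.mul_re, Complex.conj_re, Complex.conj_im, Complex.add_re,
    Complex.add_im, Complex.ofReal_re, Complex.ofReal_im] at *
  field_simp
  linear_combination q θ * Real.sqrt (1 + 2 * ξ θ) ^ 2 * h1

/-- Differential of the pseudo-energy (Lemma 2.3). -/
theorem pseudo_energy_differential
    (γ : ℝ) (hγ : 1 ≤ γ)
    (ξ q : ℝ → ℝ) (hξ : ContDiff ℝ 2 ξ) (hq : ContDiff ℝ 2 q)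
    (hperξ : ∀ θ, ξ (θ + 2 * π) = ξ θ) (hperq : ∀ θ, q (θ + 2 * π) = q θ)
    (hq0 : (∫ θ in (0:ℝ)..(2 * π), q θ) = 0)
    (hpos : ∀ s ∈ Set.Icc (-1:ℝ) 1, ∀ θ, 0 < 1 + 2 * (ξ θ + s * q θ))
    (hder : ∀ s ∈ Set.Icc (-1:ℝ) 1, ∀ θ,
      deriv (wlift γ (fun t => ξ t + s * q t)) θ ≠ 0)
    (hinj : ∀ s ∈ Set.Icc (-1:ℝ) 1, ∀ θ θ' : ℝ, (∀ k : ℤ, θ - θ' ≠ 2 * π * k) →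
      wlift γ (fun t => ξ t + s * q t) θ ≠ wlift γ (fun t => ξ t + s * q t) θ') :
    -- the inner integral is absolutely convergent
    (∀ θ : ℝ, IntervalIntegrable
      (fun θ' =>
        (Real.log (Complex.normSq (wlift γ ξ θ - wlift γ ξ θ')) - 1) *
          (((starRingEnd ℂ) (wlift γ ξ θ') - (starRingEnd ℂ) (wlift γ ξ θ)) *
            deriv (wlift γ ξ) θ').im)
      volume 0 (2 * π)) ∧
    -- s ↦ E(ξ + s q) is differentiable at 0 with the stated derivative
    HasDerivAt (fun s => Epseudo γ (fun θ => ξ θ + s * q θ))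
      (∫ θ in (0:ℝ)..(2 * π),
        q θ *
          ((1 / (4 * π)) *
            ∫ θ' in (0:ℝ)..(2 * π),
              (Real.log (Complex.normSq (wlift γ ξ θ - wlift γ ξ θ')) - 1) *
                (((starRingEnd ℂ) (wlift γ ξ θ') - (starRingEnd ℂ) (wlift γ ξ θ)) *
                  deriv (wlift γ ξ) θ').im))
      0 := by
  have hγ0 : 0 < γ := by linarith
  have hξc := hξ.continuous
  have hqc := hq.continuous
  have hξ'c : Continuous (deriv ξ) := hξ.continuous_deriv (by norm_num)
  have hq'c : Continuous (deriv q) := hq.continuous_deriv (by norm_num)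
  have hξd : ∀ θ, HasDerivAt ξ (deriv ξ θ) θ := fun θ =>
    (hξ.differentiable (by norm_num) θ).hasDerivAt
  have hqd : ∀ θ, HasDerivAt q (deriv q θ) θ := fun θ =>
    (hq.differentiable (by norm_num) θ).hasDerivAt
  set Ξ : ℝ → ℝ → ℝ := fun s t => ξ t + s * q t with hΞ
  set Ξ' : ℝ → ℝ → ℝ := fun s t => deriv ξ t + s * deriv q t with hΞ'
  have hΞ0 : Ξ 0 = ξ := by simp [hΞ]
  have hΞ'0 : Ξ' 0 = deriv ξ := by simp [hΞ']
  have hI : Set.Ioo (-1:ℝ) 1 ⊆ Set.Icc (-1) 1 := Set.Ioo_subset_Icc_self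
  have hpos0 : ∀ θ, 0 < 1 + 2 * ξ θ := fun θ => by simpa using hpos 0 (by norm_num) θ
  have htan : ∀ s ∈ Set.Icc (-1:ℝ) 1, ∀ θ,
      HasDerivAt (wlift γ (Ξ s)) (wtangent γ (Ξ s) (Ξ' s) θ) θ := fun s hs θ =>
    hasDerivAt_wlift γ ((hξd θ).add ((hqd θ).const_mul s)) (hpos s hs θ)
  have htan0 : ∀ θ, HasDerivAt (wlift γ ξ) (wtangent γ ξ (deriv ξ) θ) θ := fun θ =>
    hasDerivAt_wlift γ (hξd θ) (hpos0 θ)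
  have hvel0 : ∀ θ, HasDerivAt (wvelocity γ ξ q)
      (wtangentVelocity γ ξ (deriv ξ) q (deriv q) θ) θ := fun θ =>
    hasDerivAt_wvelocity γ (hξd θ) (hqd θ) (hpos0 θ)
  have hR : Continuous fun x : ℝ × ℝ => Real.sqrt (1 + 2 * Ξ x.1 x.2) := by
    simp only [hΞ]
    fun_prop
  have hΞ'c : Continuous fun x : ℝ × ℝ => Ξ' x.1 x.2 := by
    simp only [hΞ']
    fun_prop
  have hR0 : ∀ x ∈ Set.Icc (-1:ℝ) 1 ×ˢ (Set.univ : Set ℝ), Real.sqrt (1 + 2 * Ξ x.1 x.2) ≠ 0 :=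
    fun x hx => (Real.sqrt_pos.2 (hpos x.1 hx.1 x.2)).ne'
  have hR3 : ∀ x ∈ Set.Icc (-1:ℝ) 1 ×ˢ (Set.univ : Set ℝ),
      Real.sqrt (1 + 2 * Ξ x.1 x.2) ^ 3 ≠ 0 := fun x hx => pow_ne_zero 3 (hR0 x hx)
  have hwc : ContinuousOn (Function.uncurry fun s => wlift γ (Ξ s))
      (Set.Icc (-1) 1 ×ˢ Set.univ) := by
    simp only [Function.uncurry_def, wlift]
    fun_prop
  have hpc : ContinuousOn (Function.uncurry fun s => wtangent γ (Ξ s) (Ξ' s))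
      (Set.Icc (-1) 1 ×ˢ Set.univ) := by
    simp only [Function.uncurry_def, wtangent]
    fun_prop (disch := assumption)
  have hvc : ContinuousOn (Function.uncurry fun s => wvelocity γ (Ξ s) q)
      (Set.Icc (-1) 1 ×ˢ Set.univ) := by
    simp only [Function.uncurry_def, wvelocity]
    fun_prop (disch := assumption)
  have huc : ContinuousOn (Function.uncurry fun s => wtangentVelocity γ (Ξ s) (Ξ' s) q (deriv q))
      (Set.Icc (-1) 1 ×ˢ Set.univ) := by
    simp only [Function.uncurry_def, wtangentVelocity]
    fun_prop (disch := assumption)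
  have hw0c : Continuous (wlift γ ξ) :=
    continuous_iff_continuousAt.2 fun θ => (htan0 θ).continuousAt
  have slice : ∀ {f : ℝ → ℝ → ℂ},
      ContinuousOn (Function.uncurry f) (Set.Icc (-1) 1 ×ˢ Set.univ) → Continuous (f 0) :=
    fun hf => hf.comp_continuous (Continuous.prodMk_right 0) fun θ => ⟨by norm_num, trivial⟩
  have hp0c : Continuous (wtangent γ ξ (deriv ξ)) := by
    simpa only [hΞ0, hΞ'0] using slice hpc
  have hu0c : Continuous (wtangentVelocity γ ξ (deriv ξ) q (deriv q)) := by
    simpa only [hΞ0, hΞ'0] using slice huc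
  have hintegrand : ∀ θ θ', (Real.log (Complex.normSq (wlift γ ξ θ - wlift γ ξ θ')) - 1) *
      (((starRingEnd ℂ) (wlift γ ξ θ') - (starRingEnd ℂ) (wlift γ ξ θ)) *
        deriv (wlift γ ξ) θ').im =
      -(logGradient (wlift γ ξ θ - wlift γ ξ θ') * wtangent γ ξ (deriv ξ) θ').im := by
    intro θ θ'
    rw [(htan0 θ').deriv, logGradient, mul_assoc, Complex.im_ofReal_mul, ← mul_neg,
      ← Complex.neg_im, ← neg_mul, map_sub (starRingEnd ℂ), neg_sub]
  simp only [hintegrand]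
  have hint : ∀ θ, Continuous fun θ' =>
      -(logGradient (wlift γ ξ θ - wlift γ ξ θ') * wtangent γ ξ (deriv ξ) θ').im := fun θ =>
    (Complex.continuous_im.comp ((continuous_const.sub hw0c).logGradient.mul hp0c)).neg
  refine ⟨fun θ => (hint θ).intervalIntegrable _ _, ?_⟩
  have hE := (hasDerivAt_integral_logDensity (T := 2 * π) hwc hpc hvc huc
    (fun s hs θ => hasDerivAt_wlift_param γ ξ q (hpos s (hI hs) θ))
    (fun s hs θ => hasDerivAt_wtangent_param γ ξ (deriv ξ) q (deriv q)
      (hpos s (hI hs) θ))).const_mul (-(1 / (16 * π)))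
  have hwT : wlift γ ξ (2 * π) = wlift γ ξ 0 := by
    have h1 := hperξ 0
    have h2 := w0_add_two_pi γ 0
    rw [zero_add] at h1 h2
    simp only [wlift, h1, h2]
  have hvT : wvelocity γ ξ q (2 * π) = wvelocity γ ξ q 0 := by
    have h1 := hperξ 0
    have h2 := w0_add_two_pi γ 0
    have h3 := hperq 0
    rw [zero_add] at h1 h2 h3
    simp only [wvelocity, h1, h2, h3]
  simp only [hΞ0, hΞ'0] at hE
  rw [integral_firstVariation hp0c hu0c htan0 hvel0 hwT hvT] at hE
  simp only [wvelocity_cross_wtangent hγ0 ξ (deriv ξ) q (hpos0 _)] at hE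
  have heq : (fun s => Epseudo γ (Ξ s)) =ᶠ[nhds 0] fun s => -(1 / (16 * π)) *
      ∫ θ in (0:ℝ)..(2 * π), ∫ θ' in (0:ℝ)..(2 * π),
        logDensity (wlift γ (Ξ s) θ - wlift γ (Ξ s) θ') *
          ((starRingEnd ℂ) (wtangent γ (Ξ s) (Ξ' s) θ) * wtangent γ (Ξ s) (Ξ' s) θ').re := by
    filter_upwards [Icc_mem_nhds (show (-1:ℝ) < 0 by norm_num) (show (0:ℝ) < 1 by norm_num)]
      with s hs
    exact Epseudo_eq hγ0 (htan s hs)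
  refine (hE.congr_of_eventuallyEq heq).congr_deriv ?_
  simp only [intervalIntegral.integral_neg, mul_neg, mul_left_comm (q _),
    intervalIntegral.integral_const_mul]
  field_simp
  ring
end

section
/- (Action of the unperturbed integral operator on Fourier modes, Lemma 3.2.) For every γ ≥ 1, every integer j ≠ 0 and every θ ∈ ℝ, the absolutely convergent improper integral (1/(4π))·∫₀^{2π} ln(M(0)(θ,θ'))·e^{ijθ'} dθ' equals −(1/(2|j|))·( e^{ijθ} + κ_j·e^{−ijθ} ), where κ_j := ((γ−1)/(γ+1))^{|j|}. -/
open Real MeasureTheory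

/-- `M(0)(θ,θ') := γ(cos θ − cos θ')² + γ⁻¹(sin θ − sin θ')²`. -/
noncomputable def M0 (γ θ θ' : ℝ) : ℝ :=
  γ * (Real.cos θ - Real.cos θ') ^ 2 + γ⁻¹ * (Real.sin θ - Real.sin θ') ^ 2

open Complex in
/-- Orthogonality of the Fourier modes over one period. -/
lemma integral_exp_I_mul_int (m : ℤ) :
    ∫ t in (0:ℝ)..(2 * π), exp (I * m * t) = if m = 0 then 2 * (π : ℂ) else 0 := by
  split_ifs with h
  · simp [h]
  · have hc : I * (m : ℂ) ≠ 0 := mul_ne_zero I_ne_zero (by exact_mod_cast h)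
    rw [integral_exp_mul_complex hc]
    have : I * (m : ℂ) * ((2 * π : ℝ) : ℂ) = m * (2 * π * I) := by push_cast; ring
    rw [this, exp_int_mul_two_pi_mul_I]
    simp

open Complex in
lemma norm_exp_mul_I_sub (ρ φ t : ℝ) :
    ‖exp (t * I) - ρ * exp (φ * I)‖ = ‖1 - ρ * exp ((φ - t : ℝ) * I)‖ := by
  have : exp (t * I) - ρ * exp (φ * I) = exp (t * I) * (1 - ρ * exp ((φ - t : ℝ) * I)) := by
    have : exp (φ * I) = exp (t * I) * exp ((φ - t : ℝ) * I) := by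
      rw [← Complex.exp_add]; congr 1; push_cast; ring
    rw [this]; ring
  rw [this, norm_mul, norm_exp_ofReal_mul_I, one_mul]

open Complex in
/-- The Fourier series of the logarithmic kernel with its singularity inside the unit disc. -/
lemma hasSum_log_norm_exp_mul_I_sub {ρ : ℝ} (h0 : 0 ≤ ρ) (h1 : ρ < 1) (φ t : ℝ) :
    HasSum (fun k : ℕ => -(ρ ^ k * Real.cos (k * (φ - t)) / k))
      (Real.log ‖exp (t * I) - ρ * exp (φ * I)‖) := by
  have hz : ‖(ρ : ℂ) * exp ((φ - t : ℝ) * I)‖ < 1 := by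
    rw [norm_mul, norm_exp_ofReal_mul_I, norm_real, Real.norm_of_nonneg h0, mul_one]
    exact h1
  have h := (Complex.hasSum_re (Complex.hasSum_taylorSeries_neg_log hz)).neg
  rw [neg_re, neg_neg, log_re, ← norm_exp_mul_I_sub] at h
  refine h.congr_fun fun k => ?_
  rw [mul_pow, ← Complex.exp_nat_mul, ← ofReal_pow]
  have : (k : ℂ) * ((φ - t : ℝ) * I) = ((k * (φ - t) : ℝ) : ℂ) * I := by push_cast; ring
  rw [this, div_natCast_re, re_ofReal_mul, exp_ofReal_mul_I_re]

open Complex in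
lemma integral_cos_mul_exp (k : ℕ) (j : ℤ) (φ : ℝ) :
    ∫ t in (0:ℝ)..(2 * π), (Real.cos (k * (φ - t)) : ℂ) * exp (I * j * t) =
      (exp (I * k * φ) * (if j - k = 0 then 2 * (π : ℂ) else 0) +
        exp (-(I * k * φ)) * (if j + k = 0 then 2 * (π : ℂ) else 0)) / 2 := by
  rw [← integral_exp_I_mul_int, ← integral_exp_I_mul_int,
    ← intervalIntegral.integral_const_mul, ← intervalIntegral.integral_const_mul,
    ← intervalIntegral.integral_add, ← intervalIntegral.integral_div]
  · congr 1 with t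
    rw [ofReal_cos, Complex.cos, div_mul_eq_mul_div, add_mul]
    simp only [← Complex.exp_add]
    congr 3 <;> push_cast <;> ring
  · exact Continuous.intervalIntegrable (by fun_prop) _ _
  · exact Continuous.intervalIntegrable (by fun_prop) _ _

open Complex in
lemma integral_log_norm_exp_mul_I_sub_of_lt_one {ρ : ℝ} (h0 : 0 ≤ ρ) (h1 : ρ < 1)
    {j : ℤ} (hj : j ≠ 0) (φ : ℝ) :
    ∫ t in (0:ℝ)..(2 * π),
        (Real.log ‖exp (t * I) - ρ * exp (φ * I)‖ : ℂ) * exp (I * j * t) =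
      -(π / j.natAbs * (ρ : ℂ) ^ j.natAbs * exp (I * j * φ)) := by
  have hnorm (t : ℝ) : ‖exp (I * j * t)‖ = 1 := by
    have : I * j * t = ((j * t : ℝ) : ℂ) * I := by push_cast; ring
    rw [this, norm_exp_ofReal_mul_I]
  have hsum := intervalIntegral.hasSum_integral_of_dominated_convergence
    (a := 0) (b := 2 * π) (μ := volume)
    (F := fun (k : ℕ) (t : ℝ) =>
      ((-(ρ ^ k * Real.cos (k * (φ - t)) / k) : ℝ) : ℂ) * exp (I * j * t))
    (f := fun t : ℝ => (Real.log ‖exp (t * I) - ρ * exp (φ * I)‖ : ℂ) * exp (I * j * t))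
    (fun k _ => ρ ^ k)
    (fun k => by
      refine Continuous.aestronglyMeasurable ?_
      fun_prop)
    (fun k => .of_forall fun t _ => by
      rw [norm_mul, hnorm, mul_one, norm_real, norm_neg, norm_div, norm_mul,
        Real.norm_of_nonneg (pow_nonneg h0 k), Real.norm_natCast]
      rcases k.eq_zero_or_pos with rfl | hk
      · simp
      · refine (div_le_self (by positivity) (by exact_mod_cast hk)).trans ?_
        exact mul_le_of_le_one_right (by positivity) (Real.abs_cos_le_one _))
    (.of_forall fun _ _ => summable_geometric_of_lt_one h0 h1)
    intervalIntegrable_const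
    (.of_forall fun t _ =>
      (Complex.hasSum_ofReal.2 (hasSum_log_norm_exp_mul_I_sub h0 h1 φ t)).mul_right _)
  have hterm (k : ℕ) : ∫ t in (0:ℝ)..(2 * π),
      ((-(ρ ^ k * Real.cos (k * (φ - t)) / k) : ℝ) : ℂ) * exp (I * j * t) =
      -((ρ : ℂ) ^ k / k) * ((exp (I * k * φ) * (if j - k = 0 then 2 * (π : ℂ) else 0) +
        exp (-(I * k * φ)) * (if j + k = 0 then 2 * (π : ℂ) else 0)) / 2) := by
    rw [← integral_cos_mul_exp, ← intervalIntegral.integral_const_mul]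
    congr 1 with t
    push_cast; ring
  simp only [hterm] at hsum
  refine hsum.unique ?_
  convert hasSum_single j.natAbs ?_ using 1
  · rcases Int.natAbs_eq j with h | h
    · have hp : j + j.natAbs ≠ 0 := by omega
      have hm : j - j.natAbs = 0 := by omega
      have hc : (j : ℂ) = (j.natAbs : ℂ) := by rw [← Int.cast_natCast, ← h]
      rw [if_neg hp, if_pos hm, hc]; ring
    · have hp : j + j.natAbs = 0 := by omega
      have hm : j - j.natAbs ≠ 0 := by omega
      have hc : (j : ℂ) = -(j.natAbs : ℂ) := by exact_mod_cast congrArg (Int.cast : ℤ → ℂ) h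
      rw [if_neg hm, if_pos hp, hc, mul_neg, neg_mul]; ring
  · intro k hk
    have hp : j + k ≠ 0 := by omega
    have hm : j - k ≠ 0 := by omega
    simp [hp, hm]

open Complex in
lemma ae_exp_mul_I_ne (w : ℂ) : ∀ᵐ t : ℝ, exp (t * I) ≠ w := by
  have h := ((Set.countable_singleton w).preimage_circleMap 0 one_ne_zero).ae_notMem volume
  filter_upwards [h] with t ht
  simpa [circleMap] using ht

open Complex in
lemma intervalIntegrable_log_norm_exp_mul_I_sub (w : ℂ) :
    IntervalIntegrable (fun t : ℝ => Real.log ‖exp (t * I) - w‖) volume 0 (2 * π) := by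
  simpa [CircleIntegrable, circleMap] using
    circleIntegrable_log_norm_sub_const (a := w) (c := 0) 1

open Complex in
lemma intervalIntegrable_log_norm_mul_exp (w : ℂ) (j : ℤ) :
    IntervalIntegrable
      (fun t : ℝ => (Real.log ‖exp (t * I) - w‖ : ℂ) * exp (I * j * t)) volume 0 (2 * π) := by
  have h := intervalIntegrable_log_norm_exp_mul_I_sub w
  refine IntervalIntegrable.mul_continuousOn ?_ (by fun_prop)
  exact ⟨h.1.ofReal, h.2.ofReal⟩

/-- Moving a boundary singularity radially inwards changes the logarithmic kernel in a
controlled way. -/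
lemma abs_log_norm_sub_smul_le {z w : ℂ} (hz : ‖z‖ = 1) (hw : ‖w‖ = 1) (hzw : z ≠ w)
    {r : ℝ} (h0 : 0 ≤ r) (h1 : r < 1) :
    |Real.log ‖z - r * w‖| ≤ |Real.log ‖z - w‖| + Real.log 2 := by
  have hrw : ‖(r : ℂ) * w‖ = r := by simp [hw, abs_of_nonneg h0]
  have hpos : 0 < ‖z - w‖ := norm_pos_iff.2 (sub_ne_zero.2 hzw)
  have hlow : 1 - r ≤ ‖z - r * w‖ := by
    have := norm_sub_norm_le z (r * w)
    rwa [hz, hrw] at this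
  have hup : ‖z - r * w‖ ≤ 2 := by
    have := norm_sub_le z (r * w)
    rw [hz, hrw] at this
    linarith
  have hcmp : ‖z - w‖ ≤ 2 * ‖z - r * w‖ := by
    have h := norm_sub_le (z - r * w) (((1 - r : ℝ) : ℂ) * w)
    have he : z - r * w - ((1 - r : ℝ) : ℂ) * w = z - w := by push_cast; ring
    rw [he, norm_mul, hw, Complex.norm_real, Real.norm_of_nonneg (by linarith)] at h
    linarith
  have hpos' : 0 < ‖z - r * w‖ := by linarith
  have hl1 := Real.log_le_log hpos' hup
  have hl2 := Real.log_le_log hpos hcmp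
  rw [Real.log_mul two_ne_zero hpos'.ne'] at hl2
  have := neg_abs_le (Real.log ‖z - w‖)
  have := abs_nonneg (Real.log ‖z - w‖)
  rw [abs_le]
  constructor <;> linarith

open Complex Filter Topology in
lemma integral_log_norm_exp_mul_I_sub {ρ : ℝ} (h0 : 0 ≤ ρ) (h1 : ρ ≤ 1)
    {j : ℤ} (hj : j ≠ 0) (φ : ℝ) :
    ∫ t in (0:ℝ)..(2 * π),
        (Real.log ‖exp (t * I) - ρ * exp (φ * I)‖ : ℂ) * exp (I * j * t) =
      -(π / j.natAbs * (ρ : ℂ) ^ j.natAbs * exp (I * j * φ)) := by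
  rcases h1.lt_or_eq with h1 | rfl
  · exact integral_log_norm_exp_mul_I_sub_of_lt_one h0 h1 hj φ
  have hnorm (t : ℝ) : ‖exp (I * j * t)‖ = 1 := by
    have : I * j * t = ((j * t : ℝ) : ℂ) * I := by push_cast; ring
    rw [this, norm_exp_ofReal_mul_I]
  have hIoo : ∀ᶠ r : ℝ in 𝓝[<] 1, r ∈ Set.Ioo (0:ℝ) 1 := Ioo_mem_nhdsLT one_pos
  have hlim : Tendsto (fun r : ℝ => ∫ t in (0:ℝ)..(2 * π),
        (Real.log ‖exp (t * I) - r * exp (φ * I)‖ : ℂ) * exp (I * j * t)) (𝓝[<] 1)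
      (𝓝 (∫ t in (0:ℝ)..(2 * π),
        (Real.log ‖exp (t * I) - (1 : ℝ) * exp (φ * I)‖ : ℂ) * exp (I * j * t))) := by
    refine intervalIntegral.tendsto_integral_filter_of_dominated_convergence
      (fun t => |Real.log ‖exp (t * I) - exp (φ * I)‖| + Real.log 2) ?_ ?_ ?_ ?_
    · exact .of_forall fun r => by
        have := (intervalIntegrable_log_norm_mul_exp (r * exp (φ * I)) j).aestronglyMeasurable
        rwa [Set.uIoc_of_le two_pi_pos.le]
    · filter_upwards [hIoo] with r hr
      filter_upwards [ae_exp_mul_I_ne (exp (φ * I))] with t ht _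
      rw [norm_mul, hnorm, mul_one, norm_real]
      exact abs_log_norm_sub_smul_le (norm_exp_ofReal_mul_I t) (norm_exp_ofReal_mul_I φ) ht
        hr.1.le hr.2
    · exact (intervalIntegrable_log_norm_exp_mul_I_sub _).abs.add intervalIntegrable_const
    · filter_upwards [ae_exp_mul_I_ne (exp (φ * I))] with t ht _
      refine Tendsto.mul_const _ ?_
      refine (continuous_ofReal.tendsto _).comp ?_
      refine Tendsto.log ?_ (by simpa [sub_eq_zero] using ht)
      refine Tendsto.mono_left ?_ nhdsWithin_le_nhds
      exact Continuous.tendsto (by fun_prop) _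
  refine tendsto_nhds_unique hlim ?_
  have hrhs : Tendsto (fun r : ℝ => -(π / j.natAbs * (r : ℂ) ^ j.natAbs * exp (I * j * φ)))
      (𝓝[<] 1) (𝓝 (-(π / j.natAbs * ((1 : ℝ) : ℂ) ^ j.natAbs * exp (I * j * φ)))) :=
    (Continuous.tendsto (by fun_prop) _).mono_left nhdsWithin_le_nhds
  refine hrhs.congr' ?_
  filter_upwards [hIoo] with r hr
  exact (integral_log_norm_exp_mul_I_sub_of_lt_one hr.1.le hr.2 hj φ).symm

lemma norm_exp_mul_I_sub_sq (ρ φ t : ℝ) :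
    ‖Complex.exp (t * Complex.I) - ρ * Complex.exp (φ * Complex.I)‖ ^ 2 =
      1 + ρ ^ 2 - 2 * ρ * Real.cos (t - φ) := by
  rw [Complex.sq_norm, Complex.normSq_apply, Complex.sub_re, Complex.sub_im,
    Complex.re_ofReal_mul, Complex.im_ofReal_mul, Complex.exp_ofReal_mul_I_re,
    Complex.exp_ofReal_mul_I_re, Complex.exp_ofReal_mul_I_im, Complex.exp_ofReal_mul_I_im,
    Real.cos_sub]
  linear_combination Real.sin_sq_add_cos_sq t + ρ ^ 2 * Real.sin_sq_add_cos_sq φ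

open Complex in
/-- The kernel `M0` factors into two squared distances on the unit circle. -/
lemma M0_eq_mul_norm_sq {γ : ℝ} (hγ : 1 ≤ γ) (θ t : ℝ) :
    M0 γ θ t = (γ + 1) ^ 2 / (4 * γ) * ‖exp (t * I) - (1 : ℝ) * exp (θ * I)‖ ^ 2 *
      ‖exp (t * I) - ((γ - 1) / (γ + 1) : ℝ) * exp ((-θ : ℝ) * I)‖ ^ 2 := by
  have h0 : γ ≠ 0 := by positivity
  have h1 : γ + 1 ≠ 0 := by positivity
  rw [norm_exp_mul_I_sub_sq, norm_exp_mul_I_sub_sq, M0, sub_neg_eq_add, Real.cos_sub,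
    Real.cos_add]
  have ht := Real.sin_sq_add_cos_sq t
  have hθ := Real.sin_sq_add_cos_sq θ
  have hst : Real.sin t ^ 2 = 1 - Real.cos t ^ 2 := by linarith
  have hsθ : Real.sin θ ^ 2 = 1 - Real.cos θ ^ 2 := by linarith
  field_simp
  ring_nf
  simp only [hst, hsθ]
  ring

open Complex in
lemma log_M0_eq {γ : ℝ} (hγ : 1 ≤ γ) {θ t : ℝ} (h₁ : exp (t * I) ≠ (1 : ℝ) * exp (θ * I))
    (h₂ : exp (t * I) ≠ ((γ - 1) / (γ + 1) : ℝ) * exp ((-θ : ℝ) * I)) :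
    Real.log (M0 γ θ t) = Real.log ((γ + 1) ^ 2 / (4 * γ)) +
      2 * Real.log ‖exp (t * I) - (1 : ℝ) * exp (θ * I)‖ +
      2 * Real.log ‖exp (t * I) - ((γ - 1) / (γ + 1) : ℝ) * exp ((-θ : ℝ) * I)‖ := by
  have hc : (γ + 1) ^ 2 / (4 * γ) ≠ 0 := by positivity
  have hn₁ := pow_ne_zero 2 (norm_ne_zero_iff.2 (sub_ne_zero.2 h₁))
  have hn₂ := pow_ne_zero 2 (norm_ne_zero_iff.2 (sub_ne_zero.2 h₂))
  rw [M0_eq_mul_norm_sq hγ, Real.log_mul (mul_ne_zero hc hn₁) hn₂, Real.log_mul hc hn₁,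
    Real.log_pow, Real.log_pow]
  norm_num

/-- Action of the unperturbed integral operator on Fourier modes (Lemma 3.2);
`κ_j := ((γ−1)/(γ+1))^{|j|}`. -/
theorem W0_fourier_modes (γ : ℝ) (hγ : 1 ≤ γ) (j : ℤ) (hj : j ≠ 0) (θ : ℝ) :
    -- the improper integral is absolutely convergent
    IntervalIntegrable
      (fun θ' => (Real.log (M0 γ θ θ') : ℂ) * Complex.exp (Complex.I * j * θ'))
      volume 0 (2 * π) ∧
    -- its value
    (1 / (4 * (π : ℂ))) *
        (∫ θ' in (0:ℝ)..(2 * π),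
          (Real.log (M0 γ θ θ') : ℂ) * Complex.exp (Complex.I * j * θ'))
      = -(1 / (2 * (j.natAbs : ℂ))) *
          (Complex.exp (Complex.I * j * θ) +
            ((((γ - 1) / (γ + 1)) ^ j.natAbs : ℝ) : ℂ) *
              Complex.exp (-(Complex.I * j * θ))) := by
  have hκ0 : 0 ≤ (γ - 1) / (γ + 1) := div_nonneg (by linarith) (by linarith)
  have hκ1 : (γ - 1) / (γ + 1) ≤ 1 := (div_le_one (by linarith)).2 (by linarith)
  have hint₁ := (intervalIntegrable_log_norm_mul_exp
    ((1 : ℝ) * Complex.exp (θ * Complex.I)) j).const_mul 2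
  have hint₂ := (intervalIntegrable_log_norm_mul_exp
    (((γ - 1) / (γ + 1) : ℝ) * Complex.exp ((-θ : ℝ) * Complex.I)) j).const_mul 2
  have hint₀ : IntervalIntegrable (fun t : ℝ =>
      (Real.log ((γ + 1) ^ 2 / (4 * γ)) : ℂ) * Complex.exp (Complex.I * j * t))
      volume 0 (2 * π) := Continuous.intervalIntegrable (by fun_prop) _ _
  have hae := (ae_exp_mul_I_ne ((1 : ℝ) * Complex.exp (θ * Complex.I))).and
    (ae_exp_mul_I_ne (((γ - 1) / (γ + 1) : ℝ) * Complex.exp ((-θ : ℝ) * Complex.I)))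
  have hsplit := hae.mono fun t ht => by
    have := congrArg (fun x : ℝ => (x : ℂ) * Complex.exp (Complex.I * j * t))
      (log_M0_eq hγ ht.1 ht.2)
    simp only [Complex.ofReal_add, Complex.ofReal_mul (2 : ℝ), Complex.ofReal_ofNat, add_mul,
      mul_assoc (2 : ℂ)] at this
    exact this
  constructor
  · refine ((hint₀.add hint₁).add hint₂).congr_ae (ae_restrict_of_ae ?_)
    filter_upwards [hsplit] with t ht using ht.symm
  · rw [intervalIntegral.integral_congr_ae (hsplit.mono fun t ht _ => ht),
      intervalIntegral.integral_add (hint₀.add hint₁) hint₂,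
      intervalIntegral.integral_add hint₀ hint₁, intervalIntegral.integral_const_mul,
      intervalIntegral.integral_const_mul, intervalIntegral.integral_const_mul,
      integral_exp_I_mul_int, if_neg hj, integral_log_norm_exp_mul_I_sub zero_le_one le_rfl hj,
      integral_log_norm_exp_mul_I_sub hκ0 hκ1 hj]
    have hπ : (π : ℂ) ≠ 0 := by exact_mod_cast Real.pi_ne_zero
    have hn : (j.natAbs : ℂ) ≠ 0 := by exact_mod_cast Int.natAbs_ne_zero.2 hj
    rw [Complex.ofReal_pow, Complex.ofReal_one, one_pow, Complex.ofReal_neg, mul_neg]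
    field_simp
    ring
end
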